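/- arXiv:1607.04586 — 11 statements merged into one kernel-verified Lean document; each statement's English description precedes it below -/
import Mathlib

section
/- Let p be a prime, let G be a torsion-free abelian group, and let H be a pure subgroup of G. Then the closure of H with respect to the topology induced by the p-adic pseudometric d_p is also a pure subgroup of G. -/
/-- `g` is divisible by `p ^ k` in `G`. -/
def pDvd (p : ℕ) {G : Type*} [AddCommGroup G] (k : ℕ) (g : G) : Prop :=
  ∃ x : G, p ^ k • x = g

/-- The closure of a set `S ⊆ G` with respect to the topology induced by the
`p`-adic pseudometric: `g` lies in the closure iff for every `k` there is
`h ∈ S` with `g - h` divisible by `p ^ k` in `G`. -/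
def pClosure (p : ℕ) {G : Type*} [AddCommGroup G] (S : Set G) : Set G :=
  {g : G | ∀ k : ℕ, ∃ h ∈ S, pDvd p k (g - h)}

/-- A subgroup `H` of `G` is pure if `n • g ∈ H` with `n ≠ 0` implies `g ∈ H`. -/
def IsPureSubgroup {G : Type*} [AddCommGroup G] (H : AddSubgroup G) : Prop :=
  ∀ n : ℤ, n ≠ 0 → ∀ g : G, n • g ∈ H → g ∈ H

/-!
Modulo `H`, the closure of `H` is the subgroup of elements divisible by every power of `p`, and
purity of `H` says that `G ⧸ H` is torsion-free. So it is enough to show that, in a torsion-free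
group, if `q • g` with `q ≠ 0` is divisible by every power of `p`, then so is `g`. One may take `q`
prime. If `q ∣ p`, cancel `q` from `q • g = p ^ (k + 1) • x`; otherwise `q` is coprime to `p ^ k`
and Bézout applies.
-/

section PDvd

variable {p n k : ℕ} {G : Type*} [AddCommGroup G] {g : G}

theorem pDvd_of_nsmul_of_coprime (hn : n.Coprime p) (h : pDvd p k (n • g)) : pDvd p k g := by
  obtain ⟨x, hx⟩ := h
  obtain ⟨u, v, huv⟩ : IsCoprime (n : ℤ) (p ^ k : ℕ) := (hn.pow_right k).isCoprime
  refine ⟨u • x + v • g, ?_⟩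
  calc
    p ^ k • (u • x + v • g) = u • p ^ k • x + (v * (p ^ k : ℕ)) • g := by
      rw [smul_add, smul_comm, smul_comm _ v, mul_smul, natCast_zsmul]
    _ = (u * n + v * (p ^ k : ℕ)) • g := by rw [hx, add_smul, mul_smul u, natCast_zsmul]
    _ = g := by rw [huv, one_smul]

theorem pDvd_of_nsmul_of_dvd [IsAddTorsionFree G] (hn : n ≠ 0) (hnp : n ∣ p)
    (h : pDvd p (k + 1) (n • g)) : pDvd p k g := by
  obtain ⟨m, rfl⟩ := hnp
  obtain ⟨x, hx⟩ := h
  refine ⟨m • x, nsmul_right_injective hn ?_⟩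
  calc
    n • (n * m) ^ k • m • x = (n * m) ^ (k + 1) • x := by
      rw [smul_smul, smul_smul, pow_succ']; ring_nf
    _ = n • g := hx

theorem pDvd_mk_iff {H : AddSubgroup G} :
    pDvd p k (g : G ⧸ H) ↔ ∃ h ∈ H, pDvd p k (g - h) := by
  constructor
  · rintro ⟨y, hy⟩
    obtain ⟨x, rfl⟩ := QuotientAddGroup.mk_surjective y
    exact ⟨-(p ^ k • x) + g, QuotientAddGroup.eq.mp hy, x, by abel⟩
  · rintro ⟨h, hh, x, hx⟩
    refine ⟨x, ?_⟩
    rw [← QuotientAddGroup.mk_nsmul, hx, QuotientAddGroup.mk_sub,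
      (QuotientAddGroup.eq_zero_iff h).mpr hh, sub_zero]

end PDvd

namespace IsPureSubgroup

variable {G G' : Type*} [AddCommGroup G] [AddCommGroup G']

theorem of_prime {H : AddSubgroup G}
    (hH : ∀ q : ℕ, q.Prime → ∀ g : G, q • g ∈ H → g ∈ H) : IsPureSubgroup H := by
  have nsmul_mem : ∀ n : ℕ, n ≠ 0 → ∀ g : G, n • g ∈ H → g ∈ H := by
    intro n
    induction n using induction_on_primes with
    | zero => exact fun h => absurd rfl h
    | one => exact fun _ g hg => by rwa [one_smul] at hg
    | prime_mul q n hq ih =>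
      intro hqn g hg
      rw [mul_smul] at hg
      exact ih (right_ne_zero_of_mul hqn) g (hH q hq _ hg)
  intro n hn g hg
  refine nsmul_mem n.natAbs (Int.natAbs_ne_zero.mpr hn) g ?_
  rw [← natCast_zsmul]
  obtain h | h := Int.natAbs_eq n
  · rwa [← h]
  · rwa [h, neg_smul, neg_mem_iff] at hg

theorem comap {K : AddSubgroup G'} (hK : IsPureSubgroup K) (f : G →+ G') :
    IsPureSubgroup (K.comap f) := fun n hn g hg =>
  hK n hn (f g) (by rwa [AddSubgroup.mem_comap, map_zsmul] at hg)

theorem isAddTorsionFree_quotient {H : AddSubgroup G} (hH : IsPureSubgroup H) :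
    IsAddTorsionFree (G ⧸ H) := by
  refine ⟨fun n hn =>
    (injective_iff_map_eq_zero (nsmulAddMonoidHom (α := G ⧸ H) n)).mpr fun y hy => ?_⟩
  obtain ⟨g, rfl⟩ := QuotientAddGroup.mk_surjective y
  have hng : n • g ∈ H := (QuotientAddGroup.eq_zero_iff _).mp hy
  exact (QuotientAddGroup.eq_zero_iff g).mpr
    (hH n (Nat.cast_ne_zero.mpr hn) g (by rwa [natCast_zsmul]))

end IsPureSubgroup

/-- The subgroup `⋂ₖ pᵏ G` of elements of infinite `p`-height, used to describe closures in
quotients. -/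
def infinitePHeight (p : ℕ) (G : Type*) [AddCommGroup G] : AddSubgroup G :=
  ⨅ k : ℕ, (nsmulAddMonoidHom (p ^ k)).range

section InfinitePHeight

variable (p : ℕ) {G : Type*} [AddCommGroup G]

theorem mem_infinitePHeight {g : G} : g ∈ infinitePHeight p G ↔ ∀ k, pDvd p k g :=
  AddSubgroup.mem_iInf

theorem isPureSubgroup_infinitePHeight [IsAddTorsionFree G] :
    IsPureSubgroup (infinitePHeight p G) := by
  refine .of_prime fun q hq g hg => ?_
  rw [mem_infinitePHeight] at hg ⊢
  intro k
  obtain hqp | hqp := Nat.coprime_or_dvd_of_prime hq p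
  · exact pDvd_of_nsmul_of_coprime hqp (hg k)
  · exact pDvd_of_nsmul_of_dvd hq.ne_zero hqp (hg (k + 1))

theorem coe_comap_mk_infinitePHeight (H : AddSubgroup G) :
    ((infinitePHeight p (G ⧸ H)).comap (QuotientAddGroup.mk' H) : Set G) = pClosure p H := by
  ext g
  exact (mem_infinitePHeight p).trans (forall_congr' fun _ => pDvd_mk_iff)

end InfinitePHeight

theorem stmt1_general (p : ℕ) {G : Type*} [AddCommGroup G] {H : AddSubgroup G}
    (hH : IsPureSubgroup H) :
    ∃ H' : AddSubgroup G, (H' : Set G) = pClosure p (H : Set G) ∧ IsPureSubgroup H' :=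
  have := hH.isAddTorsionFree_quotient
  ⟨_, coe_comap_mk_infinitePHeight p H, (isPureSubgroup_infinitePHeight p).comap _⟩

theorem stmt1 (p : ℕ) [Fact p.Prime] (G : Type*) [AddCommGroup G]
    [NoZeroSMulDivisors ℤ G] (H : AddSubgroup G) (hH : IsPureSubgroup H) :
    ∃ H' : AddSubgroup G, (H' : Set G) = pClosure p (H : Set G) ∧ IsPureSubgroup H' :=
  stmt1_general p hH
end

section
/- Let p be a prime, let G be a torsion-free abelian group, let g ∈ G, let H be a pure subgroup of G, and let ε > 0. If d_p(g, h) ≥ ε for every h ∈ H, then for every nonzero integer n and every h ∈ H one has (1/|n|_p) · d_p(n • g, h) ≥ ε, where |n|_p denotes the p-adic absolute value of n. -/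
/-- The `p`-adic pseudometric on a torsion-free abelian group. -/
noncomputable def pdist (p : ℕ) {G : Type*} [AddCommGroup G] (g h : G) : ℝ :=
  sInf {r : ℝ | ∃ k : ℕ, pDvd p k (g - h) ∧ r = (p : ℝ) ^ (-(k : ℤ))}

/-!
Write `n = p ^ a * m` with `m` prime to `p`, and suppose that `p ^ k` divides `n • g - h` with
`h ∈ H`. Purity of `H` removes the factor `p ^ a`, at the cost of `a` factors `p` of divisibility,
and inverting `m` modulo a power of `p` removes `m`. So some element of `H` is within
`p ^ (a - k)` of `g`, whence `ε ≤ p ^ (a - k)`, that is, `|n|_p * ε ≤ p ^ (-k)`.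
-/

section Distance

variable {p : ℕ} {G : Type*} [AddCommGroup G] {g h : G}

theorem pDvd_zero (g : G) : pDvd p 0 g :=
  ⟨g, by rw [pow_zero, one_nsmul]⟩

theorem le_pdist_iff {c : ℝ} :
    c ≤ pdist p g h ↔ ∀ k : ℕ, pDvd p k (g - h) → c ≤ (p : ℝ) ^ (-(k : ℤ)) := by
  have bddBelow : BddBelow {r : ℝ | ∃ k : ℕ, pDvd p k (g - h) ∧ r = (p : ℝ) ^ (-(k : ℤ))} :=
    ⟨0, by rintro r ⟨k, -, rfl⟩; positivity⟩
  rw [pdist, le_csInf_iff bddBelow ⟨_, 0, pDvd_zero _, rfl⟩]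
  exact ⟨fun hc k hk ↦ hc _ ⟨k, hk, rfl⟩, by rintro hc _ ⟨k, hk, rfl⟩; exact hc k hk⟩

end Distance

section Cosets

variable {p : ℕ} {G : Type*} [AddCommGroup G] {H : AddSubgroup G} {g h : G}

theorem IsPureSubgroup.mem_of_nsmul_mem (hH : IsPureSubgroup H) {n : ℕ} (hn : n ≠ 0) {x : G}
    (hx : n • x ∈ H) : x ∈ H :=
  hH n (Nat.cast_ne_zero.mpr hn) x (by rwa [natCast_zsmul])

theorem mem_of_pow_nsmul_mem (hH : ∀ x : G, p • x ∈ H → x ∈ H) (a : ℕ) {x : G}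
    (hx : p ^ a • x ∈ H) : x ∈ H := by
  induction a with
  | zero => rwa [pow_zero, one_nsmul] at hx
  | succ a ih => exact ih (hH _ (by rwa [smul_smul, ← pow_succ']))

theorem exists_mem_pDvd_sub_of_pow_nsmul (hH : ∀ x : G, p • x ∈ H → x ∈ H) (hh : h ∈ H)
    {a k : ℕ} (hdvd : pDvd p k (p ^ a • g - h)) : ∃ h' ∈ H, pDvd p (k - a) (g - h') := by
  obtain hka | ⟨b, rfl⟩ := (le_total k a).imp_right Nat.exists_eq_add_of_le
  · exact ⟨0, H.zero_mem, by rw [Nat.sub_eq_zero_of_le hka]; exact pDvd_zero _⟩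
  · obtain ⟨x, hx⟩ := hdvd
    have smul_eq : p ^ a • (g - p ^ b • x) = h := by
      rw [nsmul_sub, smul_smul, ← pow_add, hx, sub_sub_cancel]
    refine ⟨g - p ^ b • x, mem_of_pow_nsmul_mem hH a (smul_eq ▸ hh), x, ?_⟩
    rw [Nat.add_sub_cancel_left, sub_sub_cancel]

theorem exists_mem_pDvd_sub_of_isCoprime {m : ℤ} (hm : IsCoprime m p) (hh : h ∈ H) {k : ℕ}
    (hdvd : pDvd p k (m • g - h)) : ∃ h' ∈ H, pDvd p k (g - h') := by
  obtain ⟨x, hx⟩ := hdvd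
  obtain ⟨u, v, bezout⟩ : IsCoprime m ((p : ℤ) ^ k) := hm.pow_right
  refine ⟨u • h, H.zsmul_mem hh u, u • x + v • g, ?_⟩
  calc p ^ k • (u • x + v • g) = u • p ^ k • x + (v * (p : ℤ) ^ k) • g := by module
    _ = u • (m • g - h) + (v * (p : ℤ) ^ k) • g := by rw [hx]
    _ = (u * m + v * (p : ℤ) ^ k) • g - u • h := by module
    _ = g - u • h := by rw [bezout, one_zsmul]

theorem exists_mem_pDvd_sub_of_zsmul (hH : ∀ x : G, p • x ∈ H → x ∈ H) (hh : h ∈ H)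
    {m : ℤ} (hm : IsCoprime m p) {a k : ℕ} (hdvd : pDvd p k (((p : ℤ) ^ a * m) • g - h)) :
    ∃ h' ∈ H, pDvd p (k - a) (g - h') := by
  rw [mul_smul, ← Nat.cast_pow, natCast_zsmul] at hdvd
  obtain ⟨h₁, hh₁, hdvd₁⟩ := exists_mem_pDvd_sub_of_pow_nsmul hH hh hdvd
  exact exists_mem_pDvd_sub_of_isCoprime hm hh₁ hdvd₁

end Cosets

theorem exists_eq_pow_mul_and_isCoprime {p : ℕ} (hp : p.Prime) {n : ℤ} (hn : n ≠ 0) :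
    ∃ (a : ℕ) (m : ℤ), n = (p : ℤ) ^ a * m ∧ IsCoprime m p := by
  have finite : FiniteMultiplicity (p : ℤ) n :=
    Int.finiteMultiplicity_iff.mpr ⟨by simpa using hp.ne_one, hn⟩
  obtain ⟨m, n_eq, not_dvd⟩ := finite.exists_eq_pow_mul_and_not_dvd
  exact ⟨_, m, n_eq, ((Nat.prime_iff_prime_int.mp hp).coprime_iff_not_dvd.mpr not_dvd).symm⟩

theorem stmt2_general {p : ℕ} [Fact p.Prime] {G : Type*} [AddCommGroup G] {g : G}
    {H : AddSubgroup G} (hH : ∀ x : G, p • x ∈ H → x ∈ H) {ε : ℝ}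
    (hsep : ∀ h ∈ H, ε ≤ pdist p g h) (n : ℤ) {h : G} (hh : h ∈ H) :
    ‖(n : ℤ_[p])‖ * ε ≤ pdist p (n • g) h := by
  have hp : p.Prime := Fact.out
  refine le_pdist_iff.mpr fun k hdvd ↦ ?_
  obtain rfl | hn := eq_or_ne n 0
  · rw [Int.cast_zero, norm_zero, zero_mul]
    positivity
  obtain ⟨a, m, rfl, hm⟩ := exists_eq_pow_mul_and_isCoprime hp hn
  obtain ⟨h', hh', hdvd'⟩ := exists_mem_pDvd_sub_of_zsmul hH hh hm hdvd
  have norm_le : ‖(((p : ℤ) ^ a * m : ℤ) : ℤ_[p])‖ ≤ (p : ℝ) ^ (-(a : ℤ)) :=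
    PadicInt.norm_int_le_pow_iff_dvd.mpr (dvd_mul_right _ _)
  have eps_le : ε ≤ (p : ℝ) ^ (-((k - a : ℕ) : ℤ)) := le_pdist_iff.mp (hsep h' hh') _ hdvd'
  calc ‖(((p : ℤ) ^ a * m : ℤ) : ℤ_[p])‖ * ε
      ≤ ‖(((p : ℤ) ^ a * m : ℤ) : ℤ_[p])‖ * (p : ℝ) ^ (-((k - a : ℕ) : ℤ)) := by gcongr
    _ ≤ (p : ℝ) ^ (-(a : ℤ)) * (p : ℝ) ^ (-((k - a : ℕ) : ℤ)) := by gcongr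
    _ = (p : ℝ) ^ (-(a : ℤ) + -((k - a : ℕ) : ℤ)) :=
      (zpow_add₀ (Nat.cast_ne_zero.mpr hp.ne_zero) _ _).symm
    _ ≤ (p : ℝ) ^ (-(k : ℤ)) :=
      zpow_le_zpow_right₀ (Nat.one_le_cast.mpr hp.one_le) (by omega)

theorem stmt2 (p : ℕ) [Fact p.Prime] (G : Type*) [AddCommGroup G]
    [NoZeroSMulDivisors ℤ G] (g : G) (H : AddSubgroup G) (hH : IsPureSubgroup H)
    (ε : ℝ) (hε : 0 < ε) (hsep : ∀ h ∈ H, ε ≤ pdist p g h) :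
    ∀ n : ℤ, n ≠ 0 → ∀ h ∈ H, ε ≤ (1 / ‖(n : ℤ_[p])‖) * pdist p (n • g) h := by
  intro n hn h hh
  rw [one_div, ← div_eq_inv_mul, le_div_iff₀' (norm_pos_iff.mpr (Int.cast_ne_zero.mpr hn))]
  exact stmt2_general (fun _ ↦ hH.mem_of_nsmul_mem (NeZero.ne p)) hsep n hh
end

section
/- Let p be a prime, let G be a torsion-free abelian group, and let g ∈ G be an element not lying in G_p. Then the closure (with respect to the topology induced by d_p) of the pure subgroup generated by g is a minimal p-ideal of G; that is, it is a p-ideal that properly contains G_p, and every p-ideal of G that is properly contained in it equals G_p. -/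
/-- The subgroup `G_p` of elements divisible by every power of `p`, as a set. -/
def GpSet (p : ℕ) (G : Type*) [AddCommGroup G] : Set G :=
  {g : G | ∀ k : ℕ, pDvd p k g}

/-- A `p`-ideal of `G` is a pure subgroup that is closed in the topology induced
by the `p`-adic pseudometric. -/
def IsPIdeal (p : ℕ) {G : Type*} [AddCommGroup G] (J : AddSubgroup G) : Prop :=
  IsPureSubgroup J ∧ pClosure p (J : Set G) ⊆ (J : Set G)

/-- The pure subgroup of `G` generated by `g`, as a set. -/
def pureSpan {G : Type*} [AddCommGroup G] (g : G) : Set G :=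
  {x : G | ∃ n : ℤ, n ≠ 0 ∧ ∃ m : ℤ, n • x = m • g}

/-! The topology enters only through the subgroups `p ^ k G`: the closure of a subgroup `H` is the
intersection of the subgroups `H + p ^ k G`. Each of these is stable under division by integers
prime to `p`, and, when `H` is pure, dividing an element of `H + p ^ (i + k) G` by `p ^ i` gives an
element of `H + p ^ k G`; hence the closure of a pure subgroup is pure.

For minimality, let `J'` be a `p`-ideal containing some `x ∉ G_p` of the closure of the pure
subgroup generated by `g`. Both subgroups being pure, powers of `p` can be divided out of `x`, so
assume `x ∉ p G`. Approximate `x` modulo `p ^ (k + 1)` by `h` with `n • h = m • g`, where `n` and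
`m` are not both divisible by `p`. As `h ∉ p G`, in fact `p ∤ m`, so `m • g = n • h ∈ J' + p ^ k G`
gives `g ∈ J' + p ^ k G`. This holds for all `k` and `J'` is closed, so `g ∈ J'`. -/

theorem exists_smul_eq_smul_and_not_dvd_both {R M : Type*} [CommMonoid R] [MulAction R M]
    {p n m : R} {x y : M} (hp : IsSMulRegular M p) (hn : FiniteMultiplicity p n)
    (h : n • x = m • y) :
    ∃ n' m' : R, n' • x = m' • y ∧ ¬ (p ∣ n' ∧ p ∣ m') := by
  obtain ⟨k, hk⟩ := hn
  induction k generalizing n m with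
  | zero => exact ⟨n, m, h, fun hdvd => hk (by simpa only [zero_add, pow_one] using hdvd.1)⟩
  | succ k ih =>
    by_cases hdvd : p ∣ n ∧ p ∣ m
    · obtain ⟨⟨a, rfl⟩, ⟨b, rfl⟩⟩ := hdvd
      refine ih (n := a) (m := b) (hp ?_) fun ha => hk ?_
      · simpa only [mul_smul] using h
      · simpa only [pow_succ' p (k + 1)] using mul_dvd_mul_left p ha
    · exact ⟨n, m, h, hdvd⟩

section AddCommGroup

variable {G : Type*} [AddCommGroup G]

theorem mem_of_isCoprime_of_zsmul_mem {K : AddSubgroup G} {m n : ℤ} (hmn : IsCoprime m n)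
    {x : G} (hm : m • x ∈ K) (hn : n • x ∈ K) : x ∈ K := by
  obtain ⟨a, b, hab⟩ := hmn
  rw [← one_zsmul x, ← hab, add_zsmul, mul_smul, mul_smul]
  exact K.add_mem (K.zsmul_mem hm a) (K.zsmul_mem hn b)

/-- The pure subgroup generated by `g`, with carrier `pureSpan g`. -/
def pureSpanSubgroup (g : G) : AddSubgroup G where
  carrier := pureSpan g
  zero_mem' := ⟨1, one_ne_zero, 0, by simp only [smul_zero, zero_smul]⟩
  add_mem' := by
    rintro x y ⟨n, hn, m, hx⟩ ⟨n', hn', m', hy⟩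
    refine ⟨n * n', mul_ne_zero hn hn', n' * m + n * m', ?_⟩
    calc (n * n') • (x + y) = n' • (n • x) + n • (n' • y) := by module
      _ = n' • (m • g) + n • (m' • g) := by rw [hx, hy]
      _ = (n' * m + n * m') • g := by module
  neg_mem' := by
    rintro x ⟨n, hn, m, hx⟩
    exact ⟨n, hn, -m, by rw [smul_neg, hx, neg_smul]⟩

theorem mem_pureSpanSubgroup_self (g : G) : g ∈ pureSpanSubgroup g :=
  ⟨1, one_ne_zero, 1, rfl⟩

theorem isPureSubgroup_pureSpanSubgroup (g : G) : IsPureSubgroup (pureSpanSubgroup g) := by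
  rintro n hn x ⟨n', hn', m, hx⟩
  exact ⟨n' * n, mul_ne_zero hn' hn, m, by rw [mul_smul, hx]⟩

theorem pureSpanSubgroup_le {H : AddSubgroup G} (hH : IsPureSubgroup H) {g : G} (hg : g ∈ H) :
    pureSpanSubgroup g ≤ H := by
  rintro x ⟨n, hn, m, hx⟩
  exact hH n hn x (hx ▸ H.zsmul_mem hg m)

/-- The subgroup `p ^ k G`, whose elements are those satisfying `pDvd p k`. These subgroups are
the basic neighbourhoods of `0` for the `p`-adic pseudometric. -/
def pPowSubgroup (p : ℕ) (G : Type*) [AddCommGroup G] (k : ℕ) : AddSubgroup G :=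
  (nsmulAddMonoidHom (p ^ k)).range

/-- The `p`-adic closure of a subgroup `H` as a subgroup, encoded as the intersection of the
subgroups `H + p ^ k G`; its carrier is `pClosure p H` by `coe_pClosureSubgroup`. -/
def pClosureSubgroup (p : ℕ) (H : AddSubgroup G) : AddSubgroup G :=
  ⨅ k, H ⊔ pPowSubgroup p G k

variable {p : ℕ}

theorem pPowSubgroup_antitone : Antitone (pPowSubgroup p G) := by
  rintro k l hkl _ ⟨y, rfl⟩
  obtain ⟨i, rfl⟩ := exists_add_of_le hkl
  exact ⟨p ^ i • y, by simp only [nsmulAddMonoidHom_apply, pow_add, mul_smul]⟩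

theorem mem_pClosureSubgroup {H : AddSubgroup G} {x : G} :
    x ∈ pClosureSubgroup p H ↔ ∀ k, x ∈ H ⊔ pPowSubgroup p G k :=
  AddSubgroup.mem_iInf

theorem nsmul_mem_pPowSubgroup (k : ℕ) (x : G) : p ^ k • x ∈ pPowSubgroup p G k :=
  ⟨x, rfl⟩

theorem mem_sup_pPowSubgroup_iff {H : AddSubgroup G} {k : ℕ} {x : G} :
    x ∈ H ⊔ pPowSubgroup p G k ↔ ∃ h ∈ H, pDvd p k (x - h) := by
  rw [AddSubgroup.mem_sup]
  refine exists_congr fun h => and_congr_right fun _ => ⟨?_, fun hd => ?_⟩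
  · rintro ⟨_, ⟨y, rfl⟩, rfl⟩
    exact ⟨y, (add_sub_cancel_left _ _).symm⟩
  · exact ⟨x - h, hd, add_sub_cancel _ _⟩

variable (p) in
theorem coe_pClosureSubgroup (H : AddSubgroup G) :
    (pClosureSubgroup p H : Set G) = pClosure p (H : Set G) :=
  Set.ext fun _ => mem_pClosureSubgroup.trans (forall_congr' fun _ => mem_sup_pPowSubgroup_iff)

theorem le_pClosureSubgroup (H : AddSubgroup G) : H ≤ pClosureSubgroup p H :=
  le_iInf fun _ => le_sup_left

theorem pClosureSubgroup_mono {H K : AddSubgroup G} (h : H ≤ K) :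
    pClosureSubgroup p H ≤ pClosureSubgroup p K :=
  iInf_mono fun _ => sup_le_sup_right h _

theorem pClosureSubgroup_idem (H : AddSubgroup G) :
    pClosureSubgroup p (pClosureSubgroup p H) = pClosureSubgroup p H :=
  le_antisymm (le_iInf fun k => (iInf_le _ k).trans (sup_le (iInf_le _ k) le_sup_right))
    (le_pClosureSubgroup _)

theorem isPIdeal_iff {J : AddSubgroup G} :
    IsPIdeal p J ↔ IsPureSubgroup J ∧ pClosureSubgroup p J ≤ J := by
  rw [IsPIdeal, ← coe_pClosureSubgroup, SetLike.coe_subset_coe]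

theorem GpSet_subset_pClosureSubgroup (H : AddSubgroup G) :
    GpSet p G ⊆ pClosureSubgroup p H :=
  fun _ hx => mem_pClosureSubgroup.2 fun k => AddSubgroup.mem_sup_right (hx k)

theorem mem_sup_of_pow_nsmul_mem_sup {H : AddSubgroup G} (hH : IsPureSubgroup H) (hp : p ≠ 0)
    {i k : ℕ} {x : G} (hx : p ^ i • x ∈ H ⊔ pPowSubgroup p G (i + k)) :
    x ∈ H ⊔ pPowSubgroup p G k := by
  obtain ⟨h, hh, y, hy : p ^ (i + k) • y = p ^ i • x - h⟩ := mem_sup_pPowSubgroup_iff.1 hx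
  have hmem : x - p ^ k • y ∈ H := by
    refine hH (p ^ i : ℕ) (mod_cast pow_ne_zero i hp) _ ?_
    rwa [natCast_zsmul, smul_sub, smul_smul, ← pow_add, hy, sub_sub_cancel]
  exact mem_sup_pPowSubgroup_iff.2 ⟨_, hmem, y, (sub_sub_cancel _ _).symm⟩

theorem exists_pow_nsmul_eq_not_pDvd_one {x : G} (hx : x ∉ GpSet p G) :
    ∃ (i : ℕ) (x' : G), p ^ i • x' = x ∧ ¬ pDvd p 1 x' := by
  by_contra! hdvd
  refine hx fun k => ?_
  induction k with
  | zero => exact ⟨x, by rw [pow_zero, one_smul]⟩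
  | succ k ih =>
    obtain ⟨x', hx'⟩ := ih
    obtain ⟨y, rfl⟩ := hdvd k x' hx'
    exact ⟨y, by rw [pow_add, mul_smul, hx']⟩

variable [hp : Fact p.Prime]

theorem mem_of_zsmul_mem_of_pPowSubgroup_le {K : AddSubgroup G} {k : ℕ}
    (hK : pPowSubgroup p G k ≤ K) {q : ℤ} (hq : ¬ (p : ℤ) ∣ q) {x : G} (hx : q • x ∈ K) :
    x ∈ K := by
  have hcop : IsCoprime ((p ^ k : ℕ) : ℤ) q := by
    rw [Nat.cast_pow]
    exact ((Nat.prime_iff_prime_int.1 hp.out).coprime_iff_not_dvd.2 hq).pow_left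
  refine mem_of_isCoprime_of_zsmul_mem hcop ?_ hx
  rw [natCast_zsmul]
  exact hK (nsmul_mem_pPowSubgroup k x)

theorem isPIdeal_pClosureSubgroup {H : AddSubgroup G} (hH : IsPureSubgroup H) :
    IsPIdeal p (pClosureSubgroup p H) := by
  refine isPIdeal_iff.2 ⟨fun n hn x hx => mem_pClosureSubgroup.2 fun k => ?_,
    (pClosureSubgroup_idem H).le⟩
  have hfin : FiniteMultiplicity (p : ℤ) n :=
    .of_prime_left (Nat.prime_iff_prime_int.1 hp.out) hn
  obtain ⟨q, hnq, hq⟩ := hfin.exists_eq_pow_mul_and_not_dvd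
  set i := multiplicity (p : ℤ) n
  have hpow : p ^ i • q • x ∈ H ⊔ pPowSubgroup p G (i + k) := by
    rw [← natCast_zsmul, smul_smul, Nat.cast_pow, ← hnq]
    exact mem_pClosureSubgroup.1 hx (i + k)
  exact mem_of_zsmul_mem_of_pPowSubgroup_le le_sup_right hq
    (mem_sup_of_pow_nsmul_mem_sup hH hp.out.ne_zero hpow)

theorem exists_zsmul_eq_zsmul_and_not_dvd_of_mem_pureSpan (hG : IsSMulRegular G (p : ℤ)) {g h : G}
    (hh : h ∈ pureSpan g) (hdvd : ¬ pDvd p 1 h) :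
    ∃ n m : ℤ, n • h = m • g ∧ ¬ (p : ℤ) ∣ m := by
  obtain ⟨n₀, hn₀, m₀, hrel₀⟩ := hh
  have hfin : FiniteMultiplicity (p : ℤ) n₀ :=
    .of_prime_left (Nat.prime_iff_prime_int.1 hp.out) hn₀
  obtain ⟨n, m, hrel, hnm⟩ := exists_smul_eq_smul_and_not_dvd_both hG hfin hrel₀
  refine ⟨n, m, hrel, fun hm => hdvd ?_⟩
  have hn : ¬ (p : ℤ) ∣ n := fun hn => hnm ⟨hn, hm⟩
  refine mem_of_zsmul_mem_of_pPowSubgroup_le (K := pPowSubgroup p G 1) le_rfl hn ?_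
  obtain ⟨c, rfl⟩ := hm
  exact ⟨c • g, by
    rw [nsmulAddMonoidHom_apply, pow_one, hrel, mul_smul, natCast_zsmul]⟩

theorem mem_of_mem_pClosureSubgroup_pureSpanSubgroup (hG : IsSMulRegular G (p : ℤ))
    {J : AddSubgroup G} (hJ : IsPIdeal p J) {g x : G} (hxJ : x ∈ J)
    (hx : x ∈ pClosureSubgroup p (pureSpanSubgroup g)) (hxp : ¬ pDvd p 1 x) : g ∈ J := by
  refine (isPIdeal_iff.1 hJ).2 (mem_pClosureSubgroup.2 fun k => ?_)
  obtain ⟨h, hh, hxh⟩ := mem_sup_pPowSubgroup_iff.1 (mem_pClosureSubgroup.1 hx (k + 1))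
  have hhp : ¬ pDvd p 1 h := fun hhp =>
    hxp (sub_add_cancel x h ▸ (pPowSubgroup p G 1).add_mem
      (pPowSubgroup_antitone (Nat.le_add_left 1 k) hxh) hhp)
  have hhJ : h ∈ J ⊔ pPowSubgroup p G k :=
    sub_sub_cancel x h ▸ (J ⊔ pPowSubgroup p G k).sub_mem (AddSubgroup.mem_sup_left hxJ)
      (AddSubgroup.mem_sup_right (pPowSubgroup_antitone (Nat.le_succ k) hxh))
  obtain ⟨n, m, hrel, hm⟩ := exists_zsmul_eq_zsmul_and_not_dvd_of_mem_pureSpan hG hh hhp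
  exact mem_of_zsmul_mem_of_pPowSubgroup_le le_sup_right hm
    (hrel ▸ (J ⊔ pPowSubgroup p G k).zsmul_mem hhJ n)

theorem pClosureSubgroup_pureSpanSubgroup_le (hG : IsSMulRegular G (p : ℤ)) {J : AddSubgroup G}
    (hJ : IsPIdeal p J) {g x : G} (hxJ : x ∈ J)
    (hx : x ∈ pClosureSubgroup p (pureSpanSubgroup g)) (hxp : x ∉ GpSet p G) :
    pClosureSubgroup p (pureSpanSubgroup g) ≤ J := by
  obtain ⟨i, x', rfl, hx'p⟩ := exists_pow_nsmul_eq_not_pDvd_one hxp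
  have hx'mem {K : AddSubgroup G} (hK : IsPIdeal p K) (hxK : p ^ i • x' ∈ K) : x' ∈ K :=
    hK.1 (p ^ i : ℕ) (mod_cast pow_ne_zero i hp.out.ne_zero) x' (by rwa [natCast_zsmul])
  have hgJ : g ∈ J := mem_of_mem_pClosureSubgroup_pureSpanSubgroup hG hJ (hx'mem hJ hxJ)
    (hx'mem (isPIdeal_pClosureSubgroup (isPureSubgroup_pureSpanSubgroup g)) hx) hx'p
  exact (pClosureSubgroup_mono (pureSpanSubgroup_le hJ.1 hgJ)).trans (isPIdeal_iff.1 hJ).2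

end AddCommGroup

theorem stmt3_general (p : ℕ) [Fact p.Prime] (G : Type*) [AddCommGroup G]
    (hG : IsSMulRegular G (p : ℤ)) (g : G) (hg : g ∉ GpSet p G) :
    ∃ J : AddSubgroup G,
      (J : Set G) = pClosure p (pureSpan g) ∧
      IsPIdeal p J ∧
      GpSet p G ⊂ (J : Set G) ∧
      ∀ J' : AddSubgroup G, IsPIdeal p J' → (J' : Set G) ⊂ (J : Set G) →
        (J' : Set G) = GpSet p G := by
  have hgJ : g ∈ pClosureSubgroup p (pureSpanSubgroup g) :=
    le_pClosureSubgroup _ (mem_pureSpanSubgroup_self g)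
  refine ⟨pClosureSubgroup p (pureSpanSubgroup g), coe_pClosureSubgroup p _,
    isPIdeal_pClosureSubgroup (isPureSubgroup_pureSpanSubgroup g),
    ⟨GpSet_subset_pClosureSubgroup _, fun h => hg (h hgJ)⟩, fun J' hJ' hlt => ?_⟩
  refine Set.Subset.antisymm (fun x hx => ?_)
    ((GpSet_subset_pClosureSubgroup J').trans (isPIdeal_iff.1 hJ').2)
  by_contra hxp
  exact hlt.2 (pClosureSubgroup_pureSpanSubgroup_le hG hJ' hx (hlt.1 hx) hxp)

theorem stmt3 (p : ℕ) [Fact p.Prime] (G : Type*) [AddCommGroup G]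
    [NoZeroSMulDivisors ℤ G] (g : G) (hg : g ∉ GpSet p G) :
    ∃ J : AddSubgroup G,
      (J : Set G) = pClosure p (pureSpan g) ∧
      IsPIdeal p J ∧
      GpSet p G ⊂ (J : Set G) ∧
      ∀ J' : AddSubgroup G, IsPIdeal p J' → (J' : Set G) ⊂ (J : Set G) →
        (J' : Set G) = GpSet p G :=
  stmt3_general p G (IsSMulRegular.of_ne_zero (mod_cast (Fact.out : p.Prime).ne_zero)) g hg
end

section
/- Let p be a prime, let G be a torsion-free abelian group, let t be a p-adic sublinear pseudometric on G, let H be a subgroup of G, let g ∈ G, and let f : H → ℤ_p be a t-contractive homomorphism. For h ∈ H and a nonzero integer n, define the subset B(h, n) := {α ∈ ℚ_p : |n|_p · ‖α − (1/n) f(h)‖ ≤ t(n • g, h)} of the field ℚ_p of p-adic numbers. Then: (1) the intersection of B(h, n) over all h ∈ H and all nonzero integers n is nonempty; (2) if f extends to a t-contractive homomorphism f' on the subgroup H + ℤ • g, then f'(g) lies in this intersection; (3) for every β in this intersection, f extends to a t-contractive homomorphism f' : H + ℤ • g → ℤ_p with f'(g) = β. -/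
/-- A `p`-adic sublinear pseudometric on `G`: a pseudometric that is translation
invariant, absolutely scalable, dominated by the `p`-adic pseudometric, and
satisfies the strong triangle inequality. -/
structure IsPadicSublinear (p : ℕ) [Fact p.Prime] {G : Type*} [AddCommGroup G]
    (t : G → G → ℝ) : Prop where
  nonneg : ∀ g h : G, 0 ≤ t g h
  refl : ∀ g : G, t g g = 0
  symm : ∀ g h : G, t g h = t h g
  translation : ∀ g₁ g₂ h : G, t (g₁ + h) (g₂ + h) = t g₁ g₂
  scalable : ∀ (n : ℤ) (g₁ g₂ : G), t (n • g₁) (n • g₂) = ‖(n : ℤ_[p])‖ * t g₁ g₂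
  dominated : ∀ g₁ g₂ : G, t g₁ g₂ ≤ pdist p g₁ g₂
  strong : ∀ g₁ g₂ g₃ : G, t g₁ g₂ ≤ max (t g₁ g₃) (t g₃ g₂)

/-!
A value `β = f' g` determines an extension `f'` of `f` to `H + ℤ • g`, and contractivity of that
extension says exactly that `‖n * β - f h‖ ≤ t (n • g) h` for all `h` and `n`. For `n ≠ 0` this puts
`β` in the closed ball with centre `f h / n` and radius `t (n • g) h / ‖n‖`. Comparing both `m • h`
and `n • k` with `(m * n) • g`, contractivity of `f` shows that any two of these balls meet. In an
ultrametric space balls that meet are nested, so by compactness they all have a common point.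

When `h + n • g = k + m • g`, the same inequality bounds the difference of the two candidate values
at this element by `t 0 0 = 0`, so the extension is well defined.
-/

section UltrametricBalls

variable {X ι : Type*} [PseudoMetricSpace X] [IsUltrametricDist X]

theorem closedBall_subset_closedBall_of_dist_le_max {x y : X} {r s : ℝ}
    (hrs : r ≤ s) (hxy : dist x y ≤ max r s) :
    Metric.closedBall x r ⊆ Metric.closedBall y s := fun _ hz ↦
  (dist_triangle_max _ x y).trans
    (max_le ((Metric.mem_closedBall.mp hz).trans hrs) (hxy.trans (max_le hrs le_rfl)))

theorem nonempty_iInter_closedBall_of_dist_le_max [ProperSpace X] [Nonempty ι]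
    {c : ι → X} {r : ι → ℝ} (hr : ∀ i, 0 ≤ r i)
    (hc : ∀ i j, dist (c i) (c j) ≤ max (r i) (r j)) :
    (⋂ i, Metric.closedBall (c i) (r i)).Nonempty := by
  refine IsCompact.nonempty_iInter_of_directed_nonempty_isCompact_isClosed _ (fun i j ↦ ?_)
    (fun i ↦ ⟨c i, Metric.mem_closedBall_self (hr i)⟩)
    (fun i ↦ isCompact_closedBall _ _) (fun i ↦ Metric.isClosed_closedBall)
  rcases le_total (r i) (r j) with hij | hji
  · exact ⟨i, subset_rfl, closedBall_subset_closedBall_of_dist_le_max hij (hc i j)⟩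
  · exact ⟨j, closedBall_subset_closedBall_of_dist_le_max hji (hc j i), subset_rfl⟩

end UltrametricBalls

theorem norm_mul_norm_sub_div {K : Type*} [NormedField K] {a : K} (ha : a ≠ 0) (x c : K) :
    ‖a‖ * ‖x - c / a‖ = ‖a * x - c‖ := by
  rw [← norm_mul, mul_sub, mul_div_cancel₀ _ ha]

theorem exists_addMonoidHom_sup_zmultiples {G A : Type*} [AddCommGroup G] [AddCommGroup A]
    {H : AddSubgroup G} (g : G) (f : H →+ A) (b : A)
    (hb : ∀ (h : H) (n : ℤ), (h : G) + n • g = 0 → f h + n • b = 0) :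
    ∃ F : (H ⊔ AddSubgroup.zmultiples g : AddSubgroup G) →+ A,
      ∀ (x : (H ⊔ AddSubgroup.zmultiples g : AddSubgroup G)) (h : H) (n : ℤ),
        (x : G) = h + n • g → F x = f h + n • b := by
  let π : H × ℤ →+ (H ⊔ AddSubgroup.zmultiples g : AddSubgroup G) :=
    (H.subtype.coprod (zmultiplesHom G g)).codRestrict _ fun q ↦
      AddSubgroup.add_mem_sup q.1.2 (AddSubgroup.zsmul_mem_zmultiples g q.2)
  have hπ : Function.Surjective π := by
    rintro ⟨x, hx⟩
    obtain ⟨h, hh, _, ⟨n, rfl⟩, rfl⟩ := AddSubgroup.mem_sup.mp hx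
    exact ⟨(⟨h, hh⟩, n), rfl⟩
  have hker : π.ker ≤ (f.coprod (zmultiplesHom A b)).ker := fun q hq ↦
    hb q.1 q.2 (congrArg Subtype.val hq)
  refine ⟨π.liftOfSurjective hπ ⟨_, hker⟩, fun x h n hx ↦ ?_⟩
  obtain rfl : x = π (h, n) := Subtype.ext hx
  exact AddMonoidHom.liftOfRightInverse_comp_apply _ _ _ ⟨_, hker⟩ (h, n)

section PadicExtension

variable {p : ℕ} [Fact p.Prime] {G : Type*} [AddCommGroup G] {t : G → G → ℝ}

namespace IsPadicSublinear

theorem le_one (ht : IsPadicSublinear p t) (x y : G) : t x y ≤ 1 := by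
  refine (ht.dominated x y).trans (csInf_le ⟨0, ?_⟩ ⟨0, ⟨x - y, by simp⟩, by simp⟩)
  rintro r ⟨k, -, rfl⟩
  positivity

theorem apply_sub_zero (ht : IsPadicSublinear p t) (x y : G) : t (x - y) 0 = t x y := by
  simpa only [sub_add_cancel, zero_add] using (ht.translation (x - y) 0 y).symm

end IsPadicSublinear

/-- A homomorphism from a subgroup of `G` to `ℤ_[p]` is `t`-contractive if it is `1`-Lipschitz
for the pseudometric `t`. -/
def IsContractive (t : G → G → ℝ) {H : AddSubgroup G} (f : H →+ ℤ_[p]) : Prop :=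
  ∀ h k : H, ‖f h - f k‖ ≤ t (h : G) (k : G)

/-- The intersection of the balls `B(h, n)`, which turns out to be the set of values at `g` of the
`t`-contractive extensions of `f` to `H + ℤ • g`. -/
def extensionValues (t : G → G → ℝ) {H : AddSubgroup G} (f : H →+ ℤ_[p]) (g : G) : Set ℚ_[p] :=
  {α | ∀ (h : G) (hh : h ∈ H) (n : ℤ), n ≠ 0 →
    ‖(n : ℚ_[p])‖ * ‖α - (f ⟨h, hh⟩ : ℚ_[p]) / (n : ℚ_[p])‖ ≤ t (n • g) h}

theorem isContractive_of_norm_le (ht : IsPadicSublinear p t) {H : AddSubgroup G}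
    {f : H →+ ℤ_[p]} (hf : ∀ h : H, ‖f h‖ ≤ t (h : G) 0) : IsContractive t f := fun h k ↦ by
  simpa only [map_sub, AddSubgroup.coe_sub, ht.apply_sub_zero] using hf (h - k)

variable {H : AddSubgroup G} {f : H →+ ℤ_[p]}

namespace IsContractive

theorem mem_extensionValues_iff (hf : IsContractive t f) {g : G} {α : ℚ_[p]} :
    α ∈ extensionValues t f g ↔ ∀ (h : H) (n : ℤ), ‖n * α - f h‖ ≤ t (n • g) h := by
  refine ⟨fun hα h n ↦ ?_, fun hα h hh n hn ↦ ?_⟩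
  · rcases eq_or_ne n 0 with rfl | hn
    · simpa using hf 0 h
    · rw [← norm_mul_norm_sub_div (Int.cast_ne_zero.mpr hn)]
      exact hα h h.2 n hn
  · rw [norm_mul_norm_sub_div (Int.cast_ne_zero.mpr hn)]
    exact hα ⟨h, hh⟩ n

theorem norm_zsmul_sub_zsmul_le (ht : IsPadicSublinear p t) (hf : IsContractive t f) (g : G)
    (h k : H) (m n : ℤ) :
    ‖m • f h - n • f k‖ ≤
      max (‖(m : ℤ_[p])‖ * t (n • g) h) (‖(n : ℤ_[p])‖ * t (m • g) k) :=
  calc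
    ‖m • f h - n • f k‖ ≤ t (m • (h : G)) (n • (k : G)) := by
      simpa only [map_zsmul, AddSubgroup.coe_zsmul] using hf (m • h) (n • k)
    _ ≤ max (t (m • (h : G)) (m • n • g)) (t (m • n • g) (n • (k : G))) := ht.strong _ _ _
    _ = max (‖(m : ℤ_[p])‖ * t (n • g) h) (‖(n : ℤ_[p])‖ * t (m • g) k) := by
      rw [ht.scalable, ht.symm, smul_comm m n g, ht.scalable]

theorem dist_div_div_le (ht : IsPadicSublinear p t) (hf : IsContractive t f) (g : G)
    (h k : H) {m n : ℤ} (hm : m ≠ 0) (hn : n ≠ 0) :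
    dist ((f h : ℚ_[p]) / n) (f k / m) ≤
      max (t (n • g) h / ‖(n : ℚ_[p])‖) (t (m • g) k / ‖(m : ℚ_[p])‖) := by
  have hm' : (m : ℚ_[p]) ≠ 0 := Int.cast_ne_zero.mpr hm
  have hn' : (n : ℚ_[p]) ≠ 0 := Int.cast_ne_zero.mpr hn
  have hcross := norm_zsmul_sub_zsmul_le ht hf g h k m n
  simp only [PadicInt.norm_def, PadicInt.coe_sub, PadicInt.coe_mul, zsmul_eq_mul,
    PadicInt.coe_intCast] at hcross
  calc
    dist ((f h : ℚ_[p]) / n) (f k / m) = ‖(m : ℚ_[p]) * f h - n * f k‖ / ‖(m * n : ℚ_[p])‖ := by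
      rw [dist_eq_norm, div_sub_div _ _ hn' hm', norm_div, mul_comm (n : ℚ_[p]) m,
        mul_comm (f h : ℚ_[p])]
    _ ≤ max (‖(m : ℚ_[p])‖ * t (n • g) h) (‖(n : ℚ_[p])‖ * t (m • g) k) / ‖(m * n : ℚ_[p])‖ := by
      gcongr
    _ = max (t (n • g) h / ‖(n : ℚ_[p])‖) (t (m • g) k / ‖(m : ℚ_[p])‖) := by
      rw [← max_div_div_right (norm_nonneg _), norm_mul,
        mul_div_mul_left _ _ (norm_ne_zero_iff.mpr hm'), mul_comm ‖(m : ℚ_[p])‖,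
        mul_div_mul_left _ _ (norm_ne_zero_iff.mpr hn')]

theorem extensionValues_nonempty (ht : IsPadicSublinear p t) (hf : IsContractive t f) (g : G) :
    (extensionValues t f g).Nonempty := by
  have : Nonempty (H × {n : ℤ // n ≠ 0}) := ⟨(0, ⟨1, one_ne_zero⟩)⟩
  obtain ⟨α, hα⟩ := nonempty_iInter_closedBall_of_dist_le_max
    (c := fun i : H × {n : ℤ // n ≠ 0} ↦ (f i.1 : ℚ_[p]) / (i.2 : ℤ))
    (fun i ↦ div_nonneg (ht.nonneg ((i.2 : ℤ) • g) i.1) (norm_nonneg ((i.2 : ℤ) : ℚ_[p])))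
    (fun i j ↦ dist_div_div_le ht hf g i.1 j.1 j.2.2 i.2.2)
  refine ⟨α, fun h hh n hn ↦ ?_⟩
  have hball := Set.mem_iInter.mp hα (⟨h, hh⟩, ⟨n, hn⟩)
  rwa [Metric.mem_closedBall, dist_eq_norm,
    le_div_iff₀' (norm_pos_iff.mpr (Int.cast_ne_zero.mpr hn))] at hball

theorem apply_mem_extensionValues {K : AddSubgroup G} {f' : K →+ ℤ_[p]}
    (hf' : IsContractive t f') (hHK : H ≤ K)
    (hext : ∀ (h : G) (hh : h ∈ H), f' ⟨h, hHK hh⟩ = f ⟨h, hh⟩) (g : K) :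
    (f' g : ℚ_[p]) ∈ extensionValues t f g := by
  intro h hh n hn
  rw [norm_mul_norm_sub_div (Int.cast_ne_zero.mpr hn), ← hext h hh]
  simpa [PadicInt.norm_def] using hf' (n • g) ⟨h, hHK hh⟩

theorem norm_le_one_of_mem_extensionValues (ht : IsPadicSublinear p t) (hf : IsContractive t f)
    {g : G} {α : ℚ_[p]} (hα : α ∈ extensionValues t f g) : ‖α‖ ≤ 1 := by
  simpa using (hf.mem_extensionValues_iff.mp hα 0 1).trans (ht.le_one _ _)

theorem norm_add_zsmul_le (ht : IsPadicSublinear p t) (hf : IsContractive t f) {g : G}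
    {b : ℤ_[p]} (hb : (b : ℚ_[p]) ∈ extensionValues t f g) (h : H) (n : ℤ) :
    ‖f h + n • b‖ ≤ t (h + n • g) 0 := by
  have hneg := hf.mem_extensionValues_iff.mp hb (-h) n
  rw [← ht.apply_sub_zero, AddSubgroup.coe_neg, sub_neg_eq_add, add_comm] at hneg
  simpa [PadicInt.norm_def, add_comm] using hneg

theorem exists_extension (ht : IsPadicSublinear p t) (hf : IsContractive t f) {g : G}
    {b : ℤ_[p]} (hb : (b : ℚ_[p]) ∈ extensionValues t f g) :
    ∃ f' : (H ⊔ AddSubgroup.zmultiples g : AddSubgroup G) →+ ℤ_[p], IsContractive t f' ∧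
      (∀ (h : G) (hh : h ∈ H), f' ⟨h, AddSubgroup.mem_sup_left hh⟩ = f ⟨h, hh⟩) ∧
      f' ⟨g, AddSubgroup.mem_sup_right (AddSubgroup.mem_zmultiples g)⟩ = b := by
  have hbound := norm_add_zsmul_le ht hf hb
  obtain ⟨f', hf'⟩ := exists_addMonoidHom_sup_zmultiples g f b fun h n h0 ↦
    norm_le_zero_iff.mp <| (hbound h n).trans_eq <| by rw [h0, ht.refl]
  refine ⟨f', isContractive_of_norm_le ht fun x ↦ ?_, fun h hh ↦ ?_, ?_⟩
  · obtain ⟨h, hh, _, ⟨n, rfl⟩, hx⟩ := AddSubgroup.mem_sup.mp x.2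
    rw [hf' x ⟨h, hh⟩ n hx.symm, ← hx]
    exact hbound ⟨h, hh⟩ n
  · simpa using hf' ⟨h, AddSubgroup.mem_sup_left hh⟩ ⟨h, hh⟩ 0 (by simp)
  · simpa using hf' ⟨g, AddSubgroup.mem_sup_right (AddSubgroup.mem_zmultiples g)⟩ 0 1 (by simp)

end IsContractive

theorem stmt4_general (ht : IsPadicSublinear p t) (hf : IsContractive t f) (g : G) :
    (extensionValues t f g).Nonempty ∧
    (∀ f' : (H ⊔ AddSubgroup.zmultiples g : AddSubgroup G) →+ ℤ_[p], IsContractive t f' →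
      (∀ (h : G) (hh : h ∈ H), f' ⟨h, AddSubgroup.mem_sup_left hh⟩ = f ⟨h, hh⟩) →
      (f' ⟨g, AddSubgroup.mem_sup_right (AddSubgroup.mem_zmultiples g)⟩ : ℚ_[p]) ∈
        extensionValues t f g) ∧
    (∀ β ∈ extensionValues t f g,
      ∃ f' : (H ⊔ AddSubgroup.zmultiples g : AddSubgroup G) →+ ℤ_[p], IsContractive t f' ∧
        (∀ (h : G) (hh : h ∈ H), f' ⟨h, AddSubgroup.mem_sup_left hh⟩ = f ⟨h, hh⟩) ∧
        (f' ⟨g, AddSubgroup.mem_sup_right (AddSubgroup.mem_zmultiples g)⟩ : ℚ_[p]) = β) := by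
  refine ⟨hf.extensionValues_nonempty ht g,
    fun f' hf' hext ↦ hf'.apply_mem_extensionValues le_sup_left hext ⟨g, _⟩, fun β hβ ↦ ?_⟩
  obtain ⟨f', hf', hext, hg⟩ :=
    hf.exists_extension ht (b := ⟨β, hf.norm_le_one_of_mem_extensionValues ht hβ⟩) hβ
  exact ⟨f', hf', hext, congrArg _ hg⟩

end PadicExtension

theorem stmt4 (p : ℕ) [Fact p.Prime] (G : Type*) [AddCommGroup G]
    [NoZeroSMulDivisors ℤ G] (t : G → G → ℝ) (ht : IsPadicSublinear p t)
    (H : AddSubgroup G) (g : G) (f : H →+ ℤ_[p])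
    (hf : ∀ h₁ h₂ : H, ‖f h₁ - f h₂‖ ≤ t (h₁ : G) (h₂ : G)) :
    -- the intersection of the sets `B(h, n)` as a subset of `ℚ_[p]`
    let B : Set ℚ_[p] := {α : ℚ_[p] | ∀ (h : G) (hh : h ∈ H) (n : ℤ), n ≠ 0 →
      ‖(n : ℚ_[p])‖ * ‖α - (f ⟨h, hh⟩ : ℚ_[p]) / (n : ℚ_[p])‖ ≤ t (n • g) h}
    -- (1) the intersection is nonempty
    B.Nonempty ∧
    -- (2) any `t`-contractive extension of `f` to `H + ℤ • g` sends `g` into the intersection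
    (∀ f' : (H ⊔ AddSubgroup.zmultiples g : AddSubgroup G) →+ ℤ_[p],
      (∀ h₁ h₂ : (H ⊔ AddSubgroup.zmultiples g : AddSubgroup G),
        ‖f' h₁ - f' h₂‖ ≤ t (h₁ : G) (h₂ : G)) →
      (∀ (h : G) (hh : h ∈ H), f' ⟨h, AddSubgroup.mem_sup_left hh⟩ = f ⟨h, hh⟩) →
      ((f' ⟨g, AddSubgroup.mem_sup_right (AddSubgroup.mem_zmultiples g)⟩ : ℚ_[p]) ∈ B)) ∧
    -- (3) every element of the intersection is the value at `g` of a `t`-contractive extension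
    (∀ β ∈ B, ∃ f' : (H ⊔ AddSubgroup.zmultiples g : AddSubgroup G) →+ ℤ_[p],
      (∀ h₁ h₂ : (H ⊔ AddSubgroup.zmultiples g : AddSubgroup G),
        ‖f' h₁ - f' h₂‖ ≤ t (h₁ : G) (h₂ : G)) ∧
      (∀ (h : G) (hh : h ∈ H), f' ⟨h, AddSubgroup.mem_sup_left hh⟩ = f ⟨h, hh⟩) ∧
      (f' ⟨g, AddSubgroup.mem_sup_right (AddSubgroup.mem_zmultiples g)⟩ : ℚ_[p]) = β) :=
  stmt4_general ht hf g
end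

section
/- Let p be a prime and let G be a torsion-free abelian group that is not p-divisible (i.e., there exists g ∈ G that is not divisible by p in G). Then there exists a nonzero p-adic functional on G, that is, a group homomorphism f : G → ℤ_p with f ≠ 0. -/
/-!
If multiplication by `p` is injective on a finitely generated abelian group, its torsion subgroup is
finite and hence `p`-divisible, so an element not divisible by `p` stays so in the free quotient
modulo torsion, where some coordinate takes it to an integer prime to `p`, that is, to a unit of
`ℤ_[p]`. Since `ℤ_[p]` is compact and its units form a closed set, Tychonoff's theorem turns such
functionals on the finitely generated subgroups into one on the whole group.
-/

section Compactness

variable {R M A : Type*} [Semiring R] [AddCommMonoid M] [Module R M] [AddCommMonoid A] [Module R A]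

theorem exists_linearMap_coe_eq_of_forall_fg {F : M → A}
    (hF : ∀ N : Submodule R M, N.FG → ∃ f : N →ₗ[R] A, ∀ x : N, f x = F x) :
    ∃ f : M →ₗ[R] A, ⇑f = F := by
  refine ⟨⟨⟨F, fun x y => ?_⟩, fun r x => ?_⟩, rfl⟩
  · obtain ⟨f, hf⟩ := hF (.span R {x, y}) (Submodule.fg_span (by simp))
    have hx : x ∈ Submodule.span R {x, y} := Submodule.subset_span (by simp)
    have hy : y ∈ Submodule.span R {x, y} := Submodule.subset_span (by simp)
    simpa only [hf, AddMemClass.mk_add_mk] using f.map_add ⟨x, hx⟩ ⟨y, hy⟩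
  · obtain ⟨f, hf⟩ := hF (.span R {x}) (Submodule.fg_span_singleton x)
    simpa only [hf, SetLike.mk_smul_mk, RingHom.id_apply] using
      f.map_smul r ⟨x, Submodule.mem_span_singleton_self x⟩

variable [TopologicalSpace A] [CompactSpace A] [T2Space A] [ContinuousAdd A]
  [ContinuousConstSMul R A]

theorem exists_linearMap_forall_mem_of_forall_fg {C : M → Set A} (hC : ∀ x, IsClosed (C x))
    (h : ∀ N : Submodule R M, N.FG → ∃ f : N →ₗ[R] A, ∀ x : N, f x ∈ C x) :
    ∃ f : M →ₗ[R] A, ∀ x, f x ∈ C x := by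
  let S (N : {N : Submodule R M // N.FG}) : Set (M → A) :=
    {F | ∃ f : N.1 →ₗ[R] A, ⇑f = fun x : N.1 => F x} ∩ {F | ∀ x : N.1, F x ∈ C x}
  have hS_anti : Antitone S := by
    rintro N K hNK F ⟨⟨f, hf⟩, hFC⟩
    exact ⟨⟨f ∘ₗ Submodule.inclusion hNK, funext fun x => congrFun hf (Submodule.inclusion hNK x)⟩,
      fun x => hFC (Submodule.inclusion hNK x)⟩
  have hS_nonempty (N) : (S N).Nonempty := by
    classical
    obtain ⟨f, hf⟩ := h N.1 N.2
    refine ⟨fun x => if hx : x ∈ N.1 then f ⟨x, hx⟩ else 0, ⟨f, ?_⟩, fun x => ?_⟩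
    · simp
    · simpa using hf x
  have hS_closed (N) : IsClosed (S N) := by
    refine ((LinearMap.isClosed_range_coe N.1 A (RingHom.id R)).preimage
      (f := fun (F : M → A) (x : N.1) => F x) (by fun_prop)).inter ?_
    rw [Set.ofPred_forall]
    exact isClosed_iInter fun x => (hC x).preimage (continuous_apply _)
  have : Nonempty {N : Submodule R M // N.FG} := ⟨⟨⊥, Submodule.fg_bot⟩⟩
  have hS_directed : Directed (· ⊇ ·) S := fun N K =>
    ⟨⟨N.1 ⊔ K.1, N.2.sup K.2⟩, hS_anti le_sup_left, hS_anti le_sup_right⟩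
  obtain ⟨F, hF⟩ := IsCompact.nonempty_iInter_of_directed_nonempty_isCompact_isClosed S
    hS_directed hS_nonempty (fun N => (hS_closed N).isCompact) hS_closed
  rw [Set.mem_iInter] at hF
  obtain ⟨f, rfl⟩ := exists_linearMap_coe_eq_of_forall_fg fun N hN =>
    (hF ⟨N, hN⟩).1.imp fun f hf x => congrFun hf x
  exact ⟨f, fun x => (hF ⟨_, Submodule.fg_span_singleton x⟩).2
    ⟨x, Submodule.mem_span_singleton_self x⟩⟩

end Compactness

theorem exists_dual_not_dvd_of_free {R M : Type*} [CommSemiring R] [AddCommMonoid M]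
    [Module R M] [Module.Free R M] {a : R} {x : M} (hx : ¬∃ y, a • y = x) :
    ∃ f : Module.Dual R M, ¬a ∣ f x := by
  contrapose! hx
  let b := Module.Free.chooseBasis R M
  choose c hc using fun i => hx (b.coord i)
  refine ⟨∑ i ∈ (b.repr x).support, c i • b i, ?_⟩
  calc a • ∑ i ∈ (b.repr x).support, c i • b i
      = ∑ i ∈ (b.repr x).support, b.repr x i • b i := by
        simp only [Finset.smul_sum, smul_smul, ← hc, b.coord_apply]
    _ = x := b.linearCombination_repr x

section FinitelyGenerated

variable {G : Type*} [AddCommGroup G] [Module.Finite ℤ G] {n : ℤ}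

open Submodule in
theorem exists_smul_eq_of_exists_smul_eq_mkQ_torsion (hn : Function.Injective fun x : G => n • x)
    {g : G} (hg : ∃ y, n • y = (torsion ℤ G).mkQ g) : ∃ x, n • x = g := by
  have : Finite (torsion ℤ G) := Module.finite_of_fg_torsion _ torsion_isTorsion
  have h_surj : Function.Surjective fun t : torsion ℤ G => n • t :=
    Finite.surjective_of_injective fun s t hst => Subtype.ext (hn (congrArg Subtype.val hst))
  obtain ⟨y, hy⟩ := hg
  obtain ⟨x, rfl⟩ := (torsion ℤ G).mkQ_surjective y
  have h_mem : g - n • x ∈ torsion ℤ G := by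
    rw [← ker_mkQ (torsion ℤ G), LinearMap.mem_ker, map_sub, map_smul, hy, sub_self]
  obtain ⟨t, ht⟩ := h_surj ⟨g - n • x, h_mem⟩
  have h_val : n • (t : G) = g - n • x := congrArg Subtype.val ht
  exact ⟨x + t, by rw [smul_add, h_val, add_sub_cancel]⟩

theorem exists_dual_not_dvd_of_finite (hn : Function.Injective fun x : G => n • x) {g : G}
    (hg : ¬∃ x, n • x = g) : ∃ f : Module.Dual ℤ G, ¬n ∣ f g := by
  obtain ⟨f, hf⟩ := exists_dual_not_dvd_of_free
    (mt (exists_smul_eq_of_exists_smul_eq_mkQ_torsion hn) hg)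
  exact ⟨f ∘ₗ (Submodule.torsion ℤ G).mkQ, hf⟩

end FinitelyGenerated

section PadicInt

variable {p : ℕ} [Fact p.Prime]

theorem isClosed_setOf_isUnit_padicInt : IsClosed {z : ℤ_[p] | IsUnit z} := by
  simp only [PadicInt.isUnit_iff]
  exact isClosed_eq continuous_norm continuous_const

theorem isUnit_intCast_padicInt_iff {k : ℤ} : IsUnit (k : ℤ_[p]) ↔ ¬(p : ℤ) ∣ k := by
  rw [← PadicInt.norm_int_lt_one_iff_dvd, ← PadicInt.not_isUnit_iff, not_not]

variable {G : Type*} [AddCommGroup G]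

theorem exists_linearMap_isUnit_apply_of_finite [Module.Finite ℤ G]
    (hp : Function.Injective fun x : G => p • x) {g : G} (hg : ¬∃ x : G, p • x = g) :
    ∃ f : G →ₗ[ℤ] ℤ_[p], IsUnit (f g) := by
  simp only [← natCast_zsmul] at hp hg
  obtain ⟨f, hf⟩ := exists_dual_not_dvd_of_finite hp hg
  exact ⟨(Int.castAddHom ℤ_[p]).toIntLinearMap ∘ₗ f, isUnit_intCast_padicInt_iff.2 hf⟩

theorem stmt7_general (hp : Function.Injective fun x : G => p • x)
    {g : G} (hg : ¬∃ x : G, p • x = g) : ∃ f : G →+ ℤ_[p], IsUnit (f g) := by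
  have h_fg (H : Submodule ℤ G) (hH : H.FG) :
      ∃ f : H →ₗ[ℤ] ℤ_[p], ∀ x : H, x = g → IsUnit (f x) := by
    by_cases hgH : g ∈ H
    · have : Module.Finite ℤ H := Module.Finite.iff_fg.2 hH
      have hp_H : Function.Injective fun x : H => p • x :=
        fun x y hxy => Subtype.ext (hp (congrArg Subtype.val hxy))
      have hg_H : ¬∃ x : H, p • x = ⟨g, hgH⟩ :=
        fun ⟨x, hx⟩ => hg ⟨x, congrArg Subtype.val hx⟩
      obtain ⟨f, hf⟩ := exists_linearMap_isUnit_apply_of_finite hp_H hg_H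
      exact ⟨f, by rintro ⟨_, _⟩ rfl; exact hf⟩
    · exact ⟨0, fun x hx => absurd (hx ▸ x.2) hgH⟩
  have h_closed (x : G) : IsClosed {z : ℤ_[p] | x = g → IsUnit z} :=
    isClosed_imp isOpen_const isClosed_setOf_isUnit_padicInt
  obtain ⟨f, hf⟩ := exists_linearMap_forall_mem_of_forall_fg h_closed h_fg
  exact ⟨f.toAddMonoidHom, hf g rfl⟩

end PadicInt

theorem stmt7 (p : ℕ) [Fact p.Prime] (G : Type*) [AddCommGroup G]
    [NoZeroSMulDivisors ℤ G] (hG : ∃ g : G, ¬∃ x : G, p • x = g) :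
    ∃ f : G →+ ℤ_[p], f ≠ 0 := by
  obtain ⟨g, hg⟩ := hG
  obtain ⟨f, hf⟩ := stmt7_general (p := p)
    (by simpa only [natCast_zsmul] using smul_right_injective G (NeZero.ne (p : ℤ))) hg
  exact ⟨f, fun h => hf.ne_zero (DFunLike.congr_fun h g)⟩
end

section
/- Let p be a prime, let G be a torsion-free abelian group, let H be a pure subgroup of G, and suppose g ∈ G does not lie in the closure of H with respect to the topology induced by the p-adic pseudometric d_p. Then there exists a p-adic functional f : G → ℤ_p such that f(h) = 0 for all h ∈ H but f(g) ≠ 0. -/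
/-!
Let `A = G ⧸ H`, on which multiplication by `p` is injective, and suppose that the image of `g` is
not divisible by `p ^ k` in `A`. Some character `χ : A → ℚ/ℤ` kills `p ^ k A` but not `g`. Since
`ℚ/ℤ` is divisible, hence injective, characters of `p A ≅ A` extend to `A`, so `χ` can be divided
by `p` over and over. The resulting sequence of characters `A → ℤ/pⁿ ⊆ ℚ/ℤ` is compatible with
reduction and assembles to a homomorphism `A → ℤ_p`, nonzero at `g` because `χ` is one of its
components.
-/

theorem pow_smul_eq_apply_zero {M X : Type*} [Monoid M] [MulAction M X] {r : M} {a : ℕ → X}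
    (ha : ∀ n, r • a (n + 1) = a n) (n : ℕ) : r ^ n • a n = a 0 := by
  induction n with
  | zero => rw [pow_zero, one_smul]
  | succ n ih => rw [pow_succ, mul_smul, ha, ih]

section RatCircle

/-- The embedding of `ℤ/N` in `ℚ/ℤ` as the group of `N`-torsion points, `m ↦ m / N`. It lets
characters with values in the `pⁿ`-torsion of `ℚ/ℤ` be read as maps to `ℤ/pⁿ`. For `N = 0` it is
the zero map, as `1 / 0 = 0`. -/
noncomputable def zmodToRatCircle (N : ℕ) : ZMod N →+ AddCircle (1 : ℚ) :=
  ZMod.lift N ⟨zmultiplesHom _ (((N : ℚ)⁻¹ : ℚ) : AddCircle (1 : ℚ)), by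
    rcases eq_or_ne N 0 with rfl | hN
    · simp
    · rw [zmultiplesHom_apply, natCast_zsmul, ← AddCircle.coe_nsmul, nsmul_eq_mul,
        mul_inv_cancel₀ (Nat.cast_ne_zero.mpr hN), AddCircle.coe_period]⟩

theorem zmodToRatCircle_intCast (N : ℕ) (m : ℤ) :
    zmodToRatCircle N m = ((m / N : ℚ) : AddCircle (1 : ℚ)) := by
  rw [zmodToRatCircle, ZMod.lift_coe, zmultiplesHom_apply, ← AddCircle.coe_zsmul, zsmul_eq_mul,
    div_eq_mul_inv]

theorem zmodToRatCircle_injective (N : ℕ) [NeZero N] :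
    Function.Injective (zmodToRatCircle N) := by
  have hN : (N : ℚ) ≠ 0 := NeZero.ne _
  refine (injective_iff_map_eq_zero _).mpr fun x hx => ?_
  obtain ⟨m, rfl⟩ := ZMod.intCast_surjective x
  rw [zmodToRatCircle_intCast, AddCircle.coe_eq_zero_iff] at hx
  obtain ⟨k, hk⟩ := hx
  rw [zsmul_one, eq_div_iff hN] at hk
  have hm : m = N * k := by
    rw [mul_comm]
    exact_mod_cast hk.symm
  exact (ZMod.intCast_zmod_eq_zero_iff_dvd m N).mpr ⟨k, hm⟩

theorem exists_zmodToRatCircle_intCast_eq {N : ℕ} [NeZero N] {a : AddCircle (1 : ℚ)}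
    (ha : N • a = 0) : ∃ m : ℤ, zmodToRatCircle N m = a := by
  obtain ⟨r, rfl⟩ := QuotientAddGroup.mk_surjective a
  obtain ⟨m, hm⟩ := (AddCircle.coe_eq_zero_iff (1 : ℚ)).mp ((AddCircle.coe_nsmul _).trans ha)
  refine ⟨m, ?_⟩
  rw [zsmul_one, nsmul_eq_mul] at hm
  rw [zmodToRatCircle_intCast, hm, mul_div_cancel_left₀ r (NeZero.ne _)]

theorem nsmul_zmodToRatCircle_mul_intCast {d : ℕ} [NeZero d] (N : ℕ) (m : ℤ) :
    d • zmodToRatCircle (d * N) m = zmodToRatCircle N m := by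
  rw [zmodToRatCircle_intCast, zmodToRatCircle_intCast, ← AddCircle.coe_nsmul, nsmul_eq_mul,
    Nat.cast_mul, mul_div_assoc', mul_div_mul_left _ _ (NeZero.ne _)]

end RatCircle

section TateModule

variable {p : ℕ} [Fact p.Prime]

theorem padicInt_eq_of_zmodToRatCircle_eq {z w : ℤ_[p]}
    (h : ∀ n, zmodToRatCircle (p ^ n) (z.toZModPow n) = zmodToRatCircle (p ^ n) (w.toZModPow n)) :
    z = w :=
  PadicInt.ext_of_toZModPow.mp fun n => zmodToRatCircle_injective (p ^ n) (h n)

theorem exists_padicInt_zmodToRatCircle_eq {a : ℕ → AddCircle (1 : ℚ)} (h0 : a 0 = 0)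
    (hsucc : ∀ n, p • a (n + 1) = a n) :
    ∃ z : ℤ_[p], ∀ n, zmodToRatCircle (p ^ n) (z.toZModPow n) = a n := by
  have torsion (n : ℕ) : p ^ n • a n = 0 := (pow_smul_eq_apply_zero hsucc n).trans h0
  choose m hm using fun n => exists_zmodToRatCircle_intCast_eq (torsion n)
  have coherent : ∀ n, (p : ℤ) ^ n ∣ m (n + 1) - m n := by
    intro n
    have hmod : ((m n : ℤ) : ZMod (p ^ n)) = m (n + 1) := by
      apply zmodToRatCircle_injective
      rw [hm, ← hsucc, ← hm, pow_succ', nsmul_zmodToRatCircle_mul_intCast]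
    exact_mod_cast (ZMod.intCast_eq_intCast_iff_dvd_sub _ _ _).mp hmod
  exact ⟨_, fun n => by rw [PadicInt.toZModPow_ofIntSeq_of_pow_dvd_sub m p coherent, hm]⟩

theorem exists_padicFunctional_of_characters {A : Type*} [AddCommGroup A]
    {χ : ℕ → CharacterModule A} (h0 : χ 0 = 0) (hsucc : ∀ n, p • χ (n + 1) = χ n) :
    ∃ f : A →+ ℤ_[p], ∀ n a, zmodToRatCircle (p ^ n) ((f a).toZModPow n) = χ n a := by
  choose f hf using fun a => exists_padicInt_zmodToRatCircle_eq (p := p) (a := fun n => χ n a)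
    (DFunLike.congr_fun h0 a) fun n => DFunLike.congr_fun (hsucc n) a
  refine ⟨AddMonoidHom.mk' f fun a b => padicInt_eq_of_zmodToRatCircle_eq fun n => ?_,
    fun n a => hf a n⟩
  rw [map_add, map_add, hf, hf, hf, map_add]

end TateModule

section Characters

variable {A : Type*} [AddCommGroup A]

theorem exists_nsmul_character_eq {n : ℕ} (hn : IsSMulRegular A n) (χ : CharacterModule A) :
    ∃ ψ : CharacterModule A, n • ψ = χ := by
  obtain ⟨ψ, hψ⟩ := CharacterModule.dual_surjective_of_injective
    (nsmulAddMonoidHom n : A →+ A).toIntLinearMap hn χ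
  refine ⟨ψ, ?_⟩
  rw [← hψ]
  ext a
  exact (map_nsmul ψ n a).symm

theorem exists_character_seq {n : ℕ} (hn : IsSMulRegular A n) (χ : CharacterModule A) :
    ∃ ψ : ℕ → CharacterModule A, ψ 0 = χ ∧ ∀ i, n • ψ (i + 1) = ψ i := by
  choose divide h_divide using exists_nsmul_character_eq hn
  refine ⟨fun i => divide^[i] χ, rfl, fun i => ?_⟩
  simp only [Function.iterate_succ_apply', h_divide]

theorem exists_character_of_not_pDvd {p k : ℕ} {a : A} (ha : ¬ pDvd p k a) :
    ∃ χ : CharacterModule A, p ^ k • χ = 0 ∧ χ a ≠ 0 := by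
  let P : AddSubgroup A := (nsmulAddMonoidHom (p ^ k)).range
  have h_ne : (a : A ⧸ P) ≠ 0 := fun h => ha ((QuotientAddGroup.eq_zero_iff a).mp h)
  obtain ⟨χ, hχ⟩ := CharacterModule.exists_character_apply_ne_zero_of_ne_zero h_ne
  refine ⟨AddMonoidHom.comp χ (QuotientAddGroup.mk' P), ?_, hχ⟩
  ext b
  have h_zero : ((p ^ k • b : A) : A ⧸ P) = 0 := (QuotientAddGroup.eq_zero_iff _).mpr ⟨b, rfl⟩
  calc p ^ k • χ (b : A ⧸ P) = χ ((p ^ k • b : A) : A ⧸ P) := (map_nsmul χ (p ^ k) _).symm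
    _ = 0 := by rw [h_zero, map_zero]

theorem exists_padicFunctional_ne_zero {p : ℕ} [Fact p.Prime] (hp : IsSMulRegular A p) {k : ℕ}
    {a : A} (ha : ¬ pDvd p k a) : ∃ f : A →+ ℤ_[p], f a ≠ 0 := by
  obtain ⟨χ, hχ, hχa⟩ := exists_character_of_not_pDvd ha
  obtain ⟨ψ, rfl, hψ⟩ := exists_character_seq hp χ
  -- Multiplying by `p ^ k` makes the sequence start at `0` and moves `ψ 0` to index `k`.
  obtain ⟨f, hf⟩ := exists_padicFunctional_of_characters (χ := fun n => p ^ k • ψ n) hχ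
    fun n => by rw [smul_comm, hψ]
  refine ⟨f, fun hfa => hχa ?_⟩
  rw [← pow_smul_eq_apply_zero hψ k, ← hf, hfa, map_zero, map_zero]

end Characters

section Quotient

variable {G : Type*} [AddCommGroup G] {H : AddSubgroup G}

theorem isSMulRegular_quotient_of_nsmul_mem {n : ℕ} (hH : ∀ x : G, n • x ∈ H → x ∈ H) :
    IsSMulRegular (G ⧸ H) n := by
  refine (injective_iff_map_eq_zero (nsmulAddMonoidHom n : G ⧸ H →+ G ⧸ H)).mpr fun q hq => ?_
  obtain ⟨x, rfl⟩ := QuotientAddGroup.mk_surjective q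
  exact (QuotientAddGroup.eq_zero_iff x).mpr (hH x ((QuotientAddGroup.eq_zero_iff _).mp hq))

theorem mem_pClosure_iff_forall_pDvd_mk {p : ℕ} {g : G} :
    g ∈ pClosure p (H : Set G) ↔ ∀ k, pDvd p k (g : G ⧸ H) := by
  refine forall_congr' fun k => ⟨?_, ?_⟩
  · rintro ⟨h, hh, x, hx⟩
    have h_eq : (g : G ⧸ H) = ((g - h : G) : G ⧸ H) :=
      QuotientAddGroup.eq_iff_sub_mem.mpr (by rwa [sub_sub_cancel])
    exact ⟨x, by rw [h_eq, ← hx, QuotientAddGroup.mk_nsmul]⟩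
  · rintro ⟨q, hq⟩
    obtain ⟨x, rfl⟩ := QuotientAddGroup.mk_surjective q
    exact ⟨g - p ^ k • x, QuotientAddGroup.eq_iff_sub_mem.mp hq.symm, x, (sub_sub_cancel _ _).symm⟩

end Quotient

theorem stmt8_general (p : ℕ) [Fact p.Prime] (G : Type*) [AddCommGroup G] (H : AddSubgroup G)
    (hH : ∀ x : G, p • x ∈ H → x ∈ H) (g : G) (hg : g ∉ pClosure p (H : Set G)) :
    ∃ f : G →+ ℤ_[p], (∀ h ∈ H, f h = 0) ∧ f g ≠ 0 := by
  obtain ⟨k, hk⟩ := not_forall.mp (mt mem_pClosure_iff_forall_pDvd_mk.mpr hg)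
  obtain ⟨f, hf⟩ := exists_padicFunctional_ne_zero (isSMulRegular_quotient_of_nsmul_mem hH) hk
  refine ⟨f.comp (QuotientAddGroup.mk' H), fun h hh => ?_, hf⟩
  have h_zero : (h : G ⧸ H) = 0 := (QuotientAddGroup.eq_zero_iff h).mpr hh
  exact (congrArg f h_zero).trans (map_zero f)

theorem stmt8 (p : ℕ) [Fact p.Prime] (G : Type*) [AddCommGroup G]
    [NoZeroSMulDivisors ℤ G] (H : AddSubgroup G) (hH : IsPureSubgroup H)
    (g : G) (hg : g ∉ pClosure p (H : Set G)) :
    ∃ f : G →+ ℤ_[p], (∀ h ∈ H, f h = 0) ∧ f g ≠ 0 :=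
  stmt8_general p G H (fun x hx => hH p (NeZero.ne _) x (by rwa [natCast_zsmul])) g hg
end

section
/- Let p be a prime, let G be a torsion-free abelian group, let H be a subgroup of G, and suppose m ∈ ℕ is such that p^m • g ∈ H for every g ∈ G (i.e., the order of every element of G/H divides p^m). Then for every g ∈ G with g ∉ H, there exists a p-adic functional f : G → ℤ_p such that ‖f(g)‖ > p^{-m} and ‖f(h)‖ ≤ p^{-m} for all h ∈ H. -/
/-!
The Prüfer group `ℚ_p / ℤ_p` is divisible, hence an injective abelian group. As `G ⧸ H` is
`p`-primary, injectivity gives a character `φ : G → ℚ_p / ℤ_p` that vanishes on `H` but not at `g`.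
When `p` acts injectively on `G`, injectivity also lets one divide `φ` by `p` again and again, and
the resulting sequence `φ / p ^ n` assembles to a lift `F : G → ℚ_p` of `φ`, because `ℚ_p` is the
inverse limit of copies of `ℚ_p / ℤ_p` along multiplication by `p`. Then `p ^ m • F` is the
required functional.
-/

theorem exists_zmod_addMonoidHom_intCast_eq_zsmul {B : Type*} [AddCommGroup B] {n : ℕ} {b : B}
    (hb : n • b = 0) : ∃ f : ZMod n →+ B, ∀ k : ℤ, f k = k • b :=
  ⟨ZMod.lift n ⟨zmultiplesHom B b, by simpa using hb⟩, fun k ↦ by simp⟩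

section Divisible

variable {A D : Type*} [AddCommGroup A] [AddCommGroup D] [DivisibleBy D ℤ]

theorem exists_addMonoidHom_apply_eq_of_addOrderOf_nsmul_eq_zero {a : A} {d : D}
    (had : addOrderOf a • d = 0) : ∃ φ : A →+ D, φ a = d := by
  obtain ⟨toA, toA_intCast⟩ :=
    exists_zmod_addMonoidHom_intCast_eq_zsmul (addOrderOf_nsmul_eq_zero a)
  obtain ⟨toD, toD_intCast⟩ := exists_zmod_addMonoidHom_intCast_eq_zsmul had
  have toA_injective : Function.Injective toA := by
    rw [injective_iff_map_eq_zero, ZMod.intCast_surjective.forall]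
    intro k hk
    rwa [ZMod.intCast_zmod_eq_zero_iff_dvd, addOrderOf_dvd_iff_zsmul_eq_zero, ← toA_intCast]
  obtain ⟨φ, hφ⟩ :=
    (Module.Baer.of_divisible D).extension_property_addMonoidHom toA toA_injective toD
  have hφ_one := DFunLike.congr_fun hφ ((1 : ℤ) : ZMod (addOrderOf a))
  exact ⟨φ, by simpa only [AddMonoidHom.comp_apply, toA_intCast, toD_intCast, one_zsmul]
    using hφ_one⟩

theorem exists_nsmul_addMonoidHom_eq {n : ℕ} (hn : IsSMulRegular A n) (φ : A →+ D) :
    ∃ ψ : A →+ D, n • ψ = φ := by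
  obtain ⟨ψ, hψ⟩ := (Module.Baer.of_divisible D).extension_property_addMonoidHom
    (nsmulAddMonoidHom (α := A) n) hn φ
  exact ⟨ψ, by ext x; simp [← hψ]⟩

theorem exists_seq_nsmul_addMonoidHom_succ_eq {n : ℕ} (hn : IsSMulRegular A n) (φ : A →+ D) :
    ∃ ψ : ℕ → A →+ D, ψ 0 = φ ∧ ∀ k, n • ψ (k + 1) = ψ k := by
  choose divide n_nsmul_divide using exists_nsmul_addMonoidHom_eq (D := D) hn
  refine ⟨fun k ↦ divide^[k] φ, rfl, fun k ↦ ?_⟩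
  simp only [Function.iterate_succ_apply', n_nsmul_divide]

end Divisible

/-- The Prüfer `p`-group, encoded as `ℚ_p / ℤ_p` rather than as `ℤ[1/p] / ℤ`, so that lifting a
character to a `p`-adic functional means lifting it along a quotient map. -/
abbrev PruferGroup (p : ℕ) [Fact p.Prime] : Type :=
  ℚ_[p] ⧸ (PadicInt.subring p).toAddSubgroup

namespace PruferGroup

variable {p : ℕ} [Fact p.Prime]

/-- The class of a `p`-adic number modulo `ℤ_p`, as the homomorphism along which characters are
lifted. -/
noncomputable def mk : ℚ_[p] →+ PruferGroup p :=
  QuotientAddGroup.mk' _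

theorem mk_surjective : Function.Surjective (mk (p := p)) :=
  QuotientAddGroup.mk'_surjective _

noncomputable instance : DivisibleBy (PruferGroup p) ℤ :=
  mk_surjective.divisibleBy _ fun x n ↦ map_zsmul mk n x

theorem mk_eq_zero_iff {x : ℚ_[p]} : mk x = 0 ↔ ‖x‖ ≤ 1 :=
  QuotientAddGroup.eq_zero_iff x

theorem mk_eq_mk_iff {x y : ℚ_[p]} : mk x = mk y ↔ ‖x - y‖ ≤ 1 := by
  rw [← sub_eq_zero, ← map_sub, mk_eq_zero_iff]

theorem mk_div_pow_eq_mk_iff {r s : ℚ_[p]} {n : ℕ} :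
    mk (r / (p : ℚ_[p]) ^ n) = mk s ↔
      r ∈ Metric.closedBall ((p : ℚ_[p]) ^ n * s) ((p : ℝ)⁻¹ ^ n) := by
  have hp : (p : ℚ_[p]) ≠ 0 := NeZero.ne _
  have hpos : 0 < ‖(p : ℚ_[p]) ^ n‖ := norm_pos_iff.2 (pow_ne_zero n hp)
  have factor : r / (p : ℚ_[p]) ^ n - s = (r - (p : ℚ_[p]) ^ n * s) / (p : ℚ_[p]) ^ n := by
    field_simp
  rw [mk_eq_mk_iff, factor, norm_div, div_le_one hpos, mem_closedBall_iff_norm, norm_pow,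
    Padic.norm_p]

theorem eq_of_forall_mk_div_pow_eq {r s : ℚ_[p]}
    (h : ∀ n : ℕ, mk (r / (p : ℚ_[p]) ^ n) = mk (s / (p : ℚ_[p]) ^ n)) : r = s := by
  have hp : (p : ℚ_[p]) ≠ 0 := NeZero.ne _
  have dist_le (n : ℕ) : dist r s ≤ (p : ℝ)⁻¹ ^ n := by
    simpa [mul_div_cancel₀, hp] using mk_div_pow_eq_mk_iff.1 (h n)
  have tendsto_zero : Filter.Tendsto (fun n : ℕ ↦ (p : ℝ)⁻¹ ^ n) Filter.atTop (nhds 0) :=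
    tendsto_pow_atTop_nhds_zero_of_lt_one (by positivity)
      (inv_lt_one_of_one_lt₀ (mod_cast (Fact.out : p.Prime).one_lt))
  exact dist_le_zero.1 (ge_of_tendsto' tendsto_zero dist_le)

theorem exists_forall_mk_div_pow_eq {a : ℕ → PruferGroup p} (ha : ∀ n, p • a (n + 1) = a n) :
    ∃ r : ℚ_[p], ∀ n, mk (r / (p : ℚ_[p]) ^ n) = a n := by
  have hp : (p : ℚ_[p]) ≠ 0 := NeZero.ne _
  choose s hs using fun n ↦ mk_surjective (a n)
  let S (n : ℕ) : Set ℚ_[p] := {r | mk (r / (p : ℚ_[p]) ^ n) = a n}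
  have S_eq_closedBall (n : ℕ) :
      S n = Metric.closedBall ((p : ℚ_[p]) ^ n * s n) ((p : ℝ)⁻¹ ^ n) := by
    ext r
    rw [← mk_div_pow_eq_mk_iff, hs]
    rfl
  have S_succ_subset (n : ℕ) : S (n + 1) ⊆ S n := fun r (hr : mk _ = _) ↦ by
    change mk _ = _
    rw [← ha, ← hr, ← map_nsmul, nsmul_eq_mul]
    congr 1
    field_simp
    ring
  have S_nonempty (n : ℕ) : (S n).Nonempty := by
    rw [S_eq_closedBall]
    exact Metric.nonempty_closedBall.2 (by positivity)
  have S_zero_isCompact : IsCompact (S 0) := by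
    rw [S_eq_closedBall]
    exact isCompact_closedBall _ _
  have S_isClosed (n : ℕ) : IsClosed (S n) := by
    rw [S_eq_closedBall]
    exact Metric.isClosed_closedBall
  obtain ⟨r, hr⟩ := IsCompact.nonempty_iInter_of_sequence_nonempty_isCompact_isClosed
    S S_succ_subset S_nonempty S_zero_isCompact S_isClosed
  exact ⟨r, Set.mem_iInter.1 hr⟩

theorem exists_mk_comp_eq {G : Type*} [AddCommGroup G] (hG : IsSMulRegular G p)
    (φ : G →+ PruferGroup p) : ∃ F : G →+ ℚ_[p], mk.comp F = φ := by
  obtain ⟨ψ, ψ_zero, ψ_succ⟩ := exists_seq_nsmul_addMonoidHom_succ_eq hG φ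
  choose F hF using fun x ↦
    exists_forall_mk_div_pow_eq (a := (ψ · x)) fun n ↦ DFunLike.congr_fun (ψ_succ n) x
  have F_add (x y : G) : F (x + y) = F x + F y :=
    eq_of_forall_mk_div_pow_eq fun n ↦ by rw [add_div, map_add, hF, hF, hF, map_add]
  refine ⟨AddMonoidHom.mk' F F_add, ?_⟩
  ext x
  simpa [ψ_zero] using hF x 0

theorem exists_addMonoidHom_apply_ne_zero {A : Type*} [AddCommGroup A] {a : A} (ha : a ≠ 0)
    {m : ℕ} (hm : p ^ m • a = 0) : ∃ φ : A →+ PruferGroup p, φ a ≠ 0 := by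
  have hp : (p : ℚ_[p]) ≠ 0 := NeZero.ne _
  have p_dvd_order : p ∣ addOrderOf a := by
    obtain ⟨k, -, hk⟩ :=
      (Nat.dvd_prime_pow Fact.out).1 (addOrderOf_dvd_of_nsmul_eq_zero hm)
    have k_ne_zero : k ≠ 0 := by
      rintro rfl
      exact ha (AddMonoid.addOrderOf_eq_one_iff.1 hk)
    exact hk ▸ dvd_pow_self p k_ne_zero
  have p_nsmul_mk : p • mk (p : ℚ_[p])⁻¹ = 0 := by
    rw [← map_nsmul, nsmul_eq_mul, mul_inv_cancel₀ hp, mk_eq_zero_iff, norm_one]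
  have mk_ne_zero : mk (p : ℚ_[p])⁻¹ ≠ 0 := by
    rw [Ne, mk_eq_zero_iff, norm_inv, Padic.norm_p, inv_inv, not_le]
    exact_mod_cast (Fact.out : p.Prime).one_lt
  obtain ⟨φ, hφ⟩ := exists_addMonoidHom_apply_eq_of_addOrderOf_nsmul_eq_zero
    (addOrderOf_dvd_iff_nsmul_eq_zero.1
      ((addOrderOf_dvd_of_nsmul_eq_zero p_nsmul_mk).trans p_dvd_order))
  exact ⟨φ, hφ ▸ mk_ne_zero⟩

end PruferGroup

open PruferGroup in
theorem exists_padic_addMonoidHom_one_lt_norm_of_notMem {p : ℕ} [Fact p.Prime] {G : Type*}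
    [AddCommGroup G] (hG : IsSMulRegular G p) {H : AddSubgroup G} {m : ℕ} {g : G}
    (hm : p ^ m • g ∈ H) (hg : g ∉ H) : ∃ F : G →+ ℚ_[p], 1 < ‖F g‖ ∧ ∀ h ∈ H, ‖F h‖ ≤ 1 := by
  have mk_g_ne_zero : QuotientAddGroup.mk' H g ≠ 0 := by simpa using hg
  have pow_nsmul_mk_g : p ^ m • QuotientAddGroup.mk' H g = 0 := by
    rw [← map_nsmul]
    exact (QuotientAddGroup.eq_zero_iff _).2 hm
  obtain ⟨φ, hφ⟩ := exists_addMonoidHom_apply_ne_zero mk_g_ne_zero pow_nsmul_mk_g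
  obtain ⟨F, hF⟩ := exists_mk_comp_eq hG (φ.comp (QuotientAddGroup.mk' H))
  have mk_F (x : G) : mk (F x) = φ (QuotientAddGroup.mk' H x) := DFunLike.congr_fun hF x
  refine ⟨F, ?_, fun h hh ↦ ?_⟩
  · rwa [← not_le, ← mk_eq_zero_iff, mk_F]
  · have mk_h : QuotientAddGroup.mk' H h = 0 := (QuotientAddGroup.eq_zero_iff h).2 hh
    rw [← mk_eq_zero_iff, mk_F, mk_h, map_zero]

theorem exists_addMonoidHom_padicInt_coe_eq {p : ℕ} [Fact p.Prime] {G : Type*} [AddCommGroup G]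
    {F : G →+ ℚ_[p]} (hF : ∀ x, ‖F x‖ ≤ 1) : ∃ f : G →+ ℤ_[p], ∀ x, (f x : ℚ_[p]) = F x :=
  ⟨F.codRestrict (PadicInt.subring p) hF, fun _ ↦ rfl⟩

theorem stmt9_general (p : ℕ) [Fact p.Prime] (G : Type*) [AddCommGroup G]
    (hG : IsSMulRegular G p) (H : AddSubgroup G) (m : ℕ) (hm : ∀ g : G, p ^ m • g ∈ H) :
    ∀ g : G, g ∉ H →
      ∃ f : G →+ ℤ_[p],
        (p : ℝ) ^ (-(m : ℤ)) < ‖f g‖ ∧ ∀ h ∈ H, ‖f h‖ ≤ (p : ℝ) ^ (-(m : ℤ)) := by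
  intro g hg
  have p_pos : (0 : ℝ) < p := mod_cast (Fact.out : p.Prime).pos
  have scale_pos : 0 < (p : ℝ) ^ (-(m : ℤ)) := zpow_pos p_pos _
  obtain ⟨F, F_g, F_H⟩ := exists_padic_addMonoidHom_one_lt_norm_of_notMem hG (hm g) hg
  obtain ⟨f, hf⟩ := exists_addMonoidHom_padicInt_coe_eq (F := p ^ m • F) fun x ↦ by
    simpa only [AddMonoidHom.nsmul_apply, map_nsmul] using F_H _ (hm x)
  have norm_f (x : G) : ‖f x‖ = (p : ℝ) ^ (-(m : ℤ)) * ‖F x‖ := by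
    rw [PadicInt.norm_def, hf, AddMonoidHom.nsmul_apply, nsmul_eq_mul, norm_mul, Nat.cast_pow,
      Padic.norm_p_pow]
  refine ⟨f, ?_, fun h hh ↦ ?_⟩
  · rw [norm_f]
    exact lt_mul_of_one_lt_right scale_pos F_g
  · rw [norm_f]
    exact mul_le_of_le_one_right scale_pos.le (F_H h hh)

theorem stmt9 (p : ℕ) [Fact p.Prime] (G : Type*) [AddCommGroup G]
    [NoZeroSMulDivisors ℤ G] (H : AddSubgroup G) (m : ℕ)
    (hm : ∀ g : G, p ^ m • g ∈ H) :
    ∀ g : G, g ∉ H →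
      ∃ f : G →+ ℤ_[p],
        (p : ℝ) ^ (-(m : ℤ)) < ‖f g‖ ∧ ∀ h ∈ H, ‖f h‖ ≤ (p : ℝ) ^ (-(m : ℤ)) :=
  have := (Module.isTorsionFree_int_iff_isAddTorsionFree (M := G)).1 inferInstance
  stmt9_general p G (IsAddTorsionFree.nsmul_right_injective (Fact.out : p.Prime).ne_zero) H m hm
end

section
/- Let p be a prime and let G be a torsion-free abelian group. Then G is p-simple but not p-divisible if and only if there is, up to multiplication by an element of ℤ_p, a unique nonzero p-adic functional on G; precisely: Hom(G, ℤ_p) contains a nonzero element, and for any two p-adic functionals f₁, f₂ on G, either f₂ = α • f₁ for some α ∈ ℤ_p or f₁ = α • f₂ for some α ∈ ℤ_p. -/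
/-- `G` is `p`-simple if `G_p` is the only proper `p`-ideal of `G`. -/
def IsPSimple (p : ℕ) (G : Type*) [AddCommGroup G] : Prop :=
  ∀ J : AddSubgroup G, IsPIdeal p J → (J : Set G) ≠ Set.univ → (J : Set G) = GpSet p G

/-!
Everything reduces to having enough `p`-adic functionals: on a group without `p`-torsion, each
element outside `G_p` is detected by some `f : G →+ ℤ_[p]`. Such an element has nonzero image in
some `ZMod (p ^ k)` under a homomorphism, since `ℚ/ℤ` is a cogenerator. Homomorphisms to
`ZMod (p ^ n)` lift to `ZMod (p ^ (n + 1))`, because `ℚ/ℤ` is injective and multiplication by `p` is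
injective on `G`, and the limit of successive lifts is a functional.

If `G` is `p`-simple and `a ∉ p G`, the kernel of a nonzero functional is a proper `p`-ideal, hence
equals `G_p` and misses `a`; evaluation at `a` is thus injective on functionals, and divisibility
in `ℤ_[p]` is total. Conversely, a proper `p`-ideal `J` containing some `g ∉ G_p` would yield a
nonzero functional vanishing on `J` and one not vanishing at `g`; neither is a multiple of the
other.
-/

section Lifting

variable {A : Type*} [AddCommGroup A]

/-- The standard embedding of `ZMod N` into `ℚ/ℤ`, sending `m` to `m / N`; it lets the injectivity
of `ℚ/ℤ` be used for homomorphisms to `ZMod N`. For `N = 0` it is the zero map. -/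
noncomputable def zmodCharacter (N : ℕ) : ZMod N →+ AddCircle (1 : ℚ) :=
  ZMod.lift N ⟨CharacterModule.int.divByNat N, CharacterModule.int.divByNat_self N⟩

theorem zmodCharacter_intCast (N : ℕ) (m : ℤ) :
    zmodCharacter N m = ((m * (N : ℚ)⁻¹ : ℚ) : AddCircle (1 : ℚ)) := by
  rw [← zsmul_eq_mul, AddCircle.coe_zsmul]
  exact ZMod.lift_coe N _ m

theorem zmodCharacter_injective (N : ℕ) [NeZero N] : Function.Injective (zmodCharacter N) := by
  refine (injective_iff_map_eq_zero _).2 fun x hx ↦ ?_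
  obtain ⟨m, rfl⟩ := ZMod.intCast_surjective x
  rw [zmodCharacter_intCast, AddCircle.coe_eq_zero_iff] at hx
  obtain ⟨k, hk⟩ := hx
  have hm : (m : ℚ) = (N * k : ℤ) := by
    have : (N : ℚ) ≠ 0 := NeZero.ne _
    field_simp at hk
    push_cast
    simpa [mul_comm] using hk.symm
  rw [ZMod.intCast_zmod_eq_zero_iff_dvd]
  exact ⟨k, mod_cast hm⟩

theorem exists_zmodCharacter_eq {N : ℕ} [NeZero N] {u : AddCircle (1 : ℚ)} (hu : N • u = 0) :
    ∃ x : ZMod N, zmodCharacter N x = u := by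
  obtain ⟨m, -, rfl⟩ := (AddCircle.nsmul_eq_zero_iff (NeZero.pos N)).1 hu
  exact ⟨(m : ℤ), by rw [zmodCharacter_intCast]; simp [div_eq_mul_inv]⟩

theorem zmodCharacter_castHom (N m : ℕ) [NeZero m] (x : ZMod (N * m)) :
    zmodCharacter N (ZMod.castHom (dvd_mul_right N m) (ZMod N) x) =
      m • zmodCharacter (N * m) x := by
  obtain ⟨k, rfl⟩ := ZMod.intCast_surjective x
  have : (m : ℚ) ≠ 0 := NeZero.ne _
  rw [map_intCast, zmodCharacter_intCast, zmodCharacter_intCast, ← AddCircle.coe_nsmul]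
  congr 1
  push_cast
  rw [nsmul_eq_mul]
  field_simp

theorem exists_zmodCharacter_comp_eq {N : ℕ} [NeZero N] {χ : A →+ AddCircle (1 : ℚ)}
    (hχ : ∀ x, N • χ x = 0) : ∃ f : A →+ ZMod N, ∀ x, zmodCharacter N (f x) = χ x := by
  choose f hf using fun x ↦ exists_zmodCharacter_eq (hχ x)
  refine ⟨AddMonoidHom.mk' f fun x y ↦ zmodCharacter_injective N ?_, hf⟩
  simp only [map_add, hf]

theorem exists_zmod_hom_apply_ne_zero {N : ℕ} [NeZero N] {a : A} (ha : ¬∃ x, N • x = a) :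
    ∃ f : A →+ ZMod N, f a ≠ 0 := by
  let π := QuotientAddGroup.mk' (nsmulAddMonoidHom N : A →+ A).range
  have hπa : π a ≠ 0 := fun h ↦ ha ((QuotientAddGroup.eq_zero_iff a).1 h)
  obtain ⟨χ, hχ⟩ := CharacterModule.exists_character_apply_ne_zero_of_ne_zero hπa
  have hNχ (x : A) : N • χ (π x) = 0 := by
    have : π (N • x) = 0 := (QuotientAddGroup.eq_zero_iff _).2 ⟨x, rfl⟩
    rw [← map_nsmul, ← map_nsmul, this, map_zero]
  obtain ⟨f, hf⟩ := exists_zmodCharacter_comp_eq (χ := AddMonoidHom.comp χ π) hNχ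
  exact ⟨f, fun hfa ↦ hχ ((hf a).symm.trans (by rw [hfa, map_zero]))⟩

theorem exists_zmod_mul_lift {m : ℕ} [NeZero m] (hm : ∀ x : A, m • x = 0 → x = 0)
    {N : ℕ} [NeZero N] (f : A →+ ZMod N) :
    ∃ g : A →+ ZMod (N * m), ∀ x, ZMod.castHom (dvd_mul_right N m) (ZMod N) (g x) = f x := by
  have hinj : Function.Injective (nsmulAddMonoidHom m : A →+ A) :=
    (injective_iff_map_eq_zero _).2 hm
  obtain ⟨χ, hχ⟩ := (Module.Baer.of_divisible (AddCircle (1 : ℚ))).extension_property_addMonoidHom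
    _ hinj ((zmodCharacter N).comp f)
  have hmχ (x : A) : m • χ x = zmodCharacter N (f x) := by
    rw [← map_nsmul]
    exact DFunLike.congr_fun hχ x
  obtain ⟨g, hg⟩ := exists_zmodCharacter_comp_eq (N := N * m) (χ := χ) fun x ↦ by
    rw [mul_smul, hmχ, ← map_nsmul, nsmul_eq_mul, CharP.cast_eq_zero, zero_mul, map_zero]
  refine ⟨g, fun x ↦ zmodCharacter_injective N ?_⟩
  rw [zmodCharacter_castHom, hg, hmχ]

theorem castHom_apply_eq_of_succ {N : ℕ → ℕ} (hN : ∀ m n, m ≤ n → N m ∣ N n)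
    {z : ∀ n, ZMod (N n)}
    (hz : ∀ n, ZMod.castHom (hN n (n + 1) n.le_succ) (ZMod (N n)) (z (n + 1)) = z n)
    (m n : ℕ) (hmn : m ≤ n) : ZMod.castHom (hN m n hmn) (ZMod (N m)) (z n) = z m := by
  induction n, hmn using Nat.le_induction with
  | base => rw [ZMod.castHom_self, RingHom.id_apply]
  | succ n hmn ih => rw [← ih, ← hz n, ← RingHom.comp_apply, ZMod.castHom_comp]

variable {p : ℕ} [Fact p.Prime]

-- `PadicInt.lift` takes limits of ring homomorphisms only; the symmetric algebra turns additive
-- maps into ring homomorphisms.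
theorem exists_padicInt_hom_of_compatible (f : ∀ n, A →+ ZMod (p ^ n))
    (hf : ∀ m n (hmn : m ≤ n) x,
      ZMod.castHom (pow_dvd_pow p hmn) (ZMod (p ^ m)) (f n x) = f m x) :
    ∃ F : A →+ ℤ_[p], ∀ n x, PadicInt.toZModPow n (F x) = f n x := by
  let ι := SymmetricAlgebra.ι ℤ A
  let φ (n : ℕ) : SymmetricAlgebra ℤ A →+* ZMod (p ^ n) :=
    (SymmetricAlgebra.lift (f n).toIntLinearMap : SymmetricAlgebra ℤ A →ₐ[ℤ] ZMod (p ^ n))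
  have hφι (n : ℕ) (x : A) : φ n (ι x) = f n x := SymmetricAlgebra.lift_ι_apply _ x
  have hφ (m n : ℕ) (hmn : m ≤ n) :
      (ZMod.castHom (pow_dvd_pow p hmn) (ZMod (p ^ m))).comp (φ n) = φ m := by
    suffices h : ((ZMod.castHom (pow_dvd_pow p hmn) (ZMod (p ^ m))).comp (φ n)).toIntAlgHom =
        (φ m).toIntAlgHom from congrArg AlgHom.toRingHom h
    refine SymmetricAlgebra.algHom_ext (LinearMap.ext fun x ↦ ?_)
    change ZMod.castHom (pow_dvd_pow p hmn) (ZMod (p ^ m)) (φ n (ι x)) = φ m (ι x)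
    rw [hφι, hφι, hf m n hmn]
  refine ⟨(PadicInt.lift hφ).toAddMonoidHom.comp ι.toAddMonoidHom, fun n x ↦ ?_⟩
  exact (RingHom.congr_fun (PadicInt.lift_spec hφ n) (ι x)).trans (hφι n x)

theorem exists_padicInt_lift (hA : ∀ x : A, p • x = 0 → x = 0) {k : ℕ} (f : A →+ ZMod (p ^ k)) :
    ∃ F : A →+ ℤ_[p], ∀ x, PadicInt.toZModPow k (F x) = f x := by
  choose next h_next using fun n (g : A →+ ZMod (p ^ n)) ↦ exists_zmod_mul_lift hA g
  let lifts (n : ℕ) : A →+ ZMod (p ^ (k + n)) := Nat.rec f (fun n ↦ next (k + n)) n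
  have hlifts (x : A) := castHom_apply_eq_of_succ (N := fun n ↦ p ^ (k + n))
    (fun m n hmn ↦ pow_dvd_pow p (Nat.add_le_add_left hmn k)) (z := fun n ↦ lifts n x)
    fun n ↦ h_next (k + n) (lifts n) x
  let reduce (n : ℕ) := ZMod.castHom (pow_dvd_pow p (Nat.le_add_left n k)) (ZMod (p ^ n))
  have hreduce (m n : ℕ) (hmn : m ≤ n) (x : A) :
      ZMod.castHom (pow_dvd_pow p hmn) (ZMod (p ^ m)) (reduce n (lifts n x)) =
        reduce m (lifts m x) := by
    rw [← hlifts x m n hmn, ← RingHom.comp_apply, ← RingHom.comp_apply, ZMod.castHom_comp,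
      ZMod.castHom_comp]
  obtain ⟨F, hF⟩ :=
    exists_padicInt_hom_of_compatible (fun n ↦ (reduce n).toAddMonoidHom.comp (lifts n)) hreduce
  exact ⟨F, fun x ↦ (hF k x).trans (hlifts x 0 k k.zero_le)⟩

theorem exists_functional_apply_ne_zero (hA : ∀ x : A, p • x = 0 → x = 0) {a : A}
    (ha : a ∉ GpSet p A) : ∃ f : A →+ ℤ_[p], f a ≠ 0 := by
  obtain ⟨k, hk⟩ : ∃ k, ¬pDvd p k a := not_forall.1 ha
  obtain ⟨f, hf⟩ := exists_zmod_hom_apply_ne_zero hk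
  obtain ⟨F, hF⟩ := exists_padicInt_lift hA f
  exact ⟨F, fun h ↦ hf (by rw [← hF, h, map_zero])⟩

end Lifting

theorem exists_eq_mul_or_exists_eq_mul {A R : Type*} [AddCommGroup A] [CommRing R]
    [PreValuationRing R] {a : A} (ha : ∀ f : A →+ R, f a = 0 → f = 0) (f₁ f₂ : A →+ R) :
    (∃ α, ∀ g, f₂ g = α * f₁ g) ∨ ∃ α, ∀ g, f₁ g = α * f₂ g := by
  have eq_mul_of_dvd (f₁ f₂ : A →+ R) (h : f₁ a ∣ f₂ a) : ∃ α, ∀ g, f₂ g = α * f₁ g := by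
    obtain ⟨α, hα⟩ := h
    have hzero := ha (f₂ - (AddMonoidHom.mulLeft α).comp f₁) (by simp [hα, mul_comm])
    exact ⟨α, fun g ↦ sub_eq_zero.1 (DFunLike.congr_fun hzero g)⟩
  exact (ValuationRing.dvd_total (f₁ a) (f₂ a)).imp (eq_mul_of_dvd f₁ f₂) (eq_mul_of_dvd f₂ f₁)

section PIdeal

variable {p : ℕ} {G : Type*} [AddCommGroup G]

theorem mem_gpSet_of_forall_exists_nsmul_eq (h : ∀ g : G, ∃ x, p • x = g) (g : G) :
    g ∈ GpSet p G := by
  intro k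
  induction k generalizing g with
  | zero => exact ⟨g, by rw [pow_zero, one_smul]⟩
  | succ k ih =>
    obtain ⟨x, rfl⟩ := h g
    obtain ⟨y, rfl⟩ := ih x
    exact ⟨y, by rw [pow_succ', mul_smul]⟩

theorem gpSet_subset_pClosure (J : AddSubgroup G) : GpSet p G ⊆ pClosure p J :=
  fun _ hg k ↦ ⟨0, J.zero_mem, by simpa only [sub_zero] using hg k⟩

theorem mk_mem_gpSet_iff {J : AddSubgroup G} {g : G} :
    (g : G ⧸ J) ∈ GpSet p (G ⧸ J) ↔ g ∈ pClosure p (J : Set G) := by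
  refine forall_congr' fun k ↦ ⟨?_, ?_⟩
  · rintro ⟨x, hx⟩
    obtain ⟨y, rfl⟩ := QuotientAddGroup.mk_surjective x
    exact ⟨-(p ^ k • y) + g, QuotientAddGroup.eq.1 hx, y, by abel⟩
  · rintro ⟨h, hh, y, hy⟩
    refine ⟨y, ?_⟩
    rw [← QuotientAddGroup.mk_nsmul, hy, QuotientAddGroup.mk_sub,
      (QuotientAddGroup.eq_zero_iff h).2 hh, sub_zero]

theorem IsPureSubgroup.eq_zero_of_nsmul_eq_zero {J : AddSubgroup G} (hJ : IsPureSubgroup J)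
    {n : ℕ} (hn : n ≠ 0) (x : G ⧸ J) (hx : n • x = 0) : x = 0 := by
  obtain ⟨y, rfl⟩ := QuotientAddGroup.mk_surjective x
  rw [← QuotientAddGroup.mk_nsmul, QuotientAddGroup.eq_zero_iff, ← natCast_zsmul] at hx
  exact (QuotientAddGroup.eq_zero_iff y).2 (hJ n (mod_cast hn) y hx)

variable [Fact p.Prime]

theorem IsPIdeal.exists_functional_separating {J : AddSubgroup G} (hJ : IsPIdeal p J) {h : G}
    (hh : h ∉ J) : ∃ f : G →+ ℤ_[p], (∀ g ∈ J, f g = 0) ∧ f h ≠ 0 := by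
  obtain ⟨f, hf⟩ := exists_functional_apply_ne_zero (hJ.1.eq_zero_of_nsmul_eq_zero (NeZero.ne p))
    fun hd ↦ hh (hJ.2 (mk_mem_gpSet_iff.1 hd))
  refine ⟨f.comp (QuotientAddGroup.mk' J), fun g hg ↦ ?_, hf⟩
  rw [AddMonoidHom.comp_apply, QuotientAddGroup.mk'_apply, (QuotientAddGroup.eq_zero_iff g).2 hg,
    map_zero]

theorem eq_zero_of_forall_pow_dvd {z : ℤ_[p]} (h : ∀ n, (p : ℤ_[p]) ^ n ∣ z) : z = 0 := by
  refine PadicInt.ext_of_toZModPow.1 fun n ↦ ?_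
  rw [map_zero, ← RingHom.mem_ker, PadicInt.ker_toZModPow, Ideal.mem_span_singleton]
  exact h n

theorem pow_dvd_apply_of_pDvd (f : G →+ ℤ_[p]) {k : ℕ} {g : G} (hg : pDvd p k g) :
    (p : ℤ_[p]) ^ k ∣ f g := by
  obtain ⟨x, rfl⟩ := hg
  exact ⟨f x, by rw [map_nsmul, nsmul_eq_mul, Nat.cast_pow]⟩

theorem isPIdeal_ker (f : G →+ ℤ_[p]) : IsPIdeal p f.ker := by
  refine ⟨fun n hn g hg ↦ ?_, fun g hg ↦ eq_zero_of_forall_pow_dvd fun k ↦ ?_⟩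
  · rw [AddMonoidHom.mem_ker, map_zsmul] at hg
    exact (smul_eq_zero.1 hg).resolve_left hn
  · obtain ⟨h, hh, hgh⟩ := hg k
    have hfh : f h = 0 := hh
    simpa only [map_sub, hfh, sub_zero] using pow_dvd_apply_of_pDvd f hgh

theorem apply_eq_zero_of_mem_gpSet (f : G →+ ℤ_[p]) {g : G} (hg : g ∈ GpSet p G) : f g = 0 :=
  (isPIdeal_ker f).2 (gpSet_subset_pClosure f.ker hg)

theorem IsPSimple.eq_zero_of_apply_eq_zero (hG : IsPSimple p G) {a : G} (ha : a ∉ GpSet p G)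
    (f : G →+ ℤ_[p]) (hfa : f a = 0) : f = 0 := by
  by_contra hf
  have hker : (f.ker : Set G) ≠ Set.univ := fun h ↦
    hf (AddMonoidHom.ext fun x ↦ Set.eq_univ_iff_forall.1 h x)
  exact ha (hG f.ker (isPIdeal_ker f) hker ▸ hfa)

theorem isPSimple_of_proportional (hG : ∀ x : G, p • x = 0 → x = 0)
    (h : ∀ f₁ f₂ : G →+ ℤ_[p],
      (∃ α : ℤ_[p], ∀ g, f₂ g = α * f₁ g) ∨ ∃ α : ℤ_[p], ∀ g, f₁ g = α * f₂ g) :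
    IsPSimple p G := by
  refine fun J hJ hne ↦ Set.Subset.antisymm (fun g hg ↦ ?_)
    ((gpSet_subset_pClosure J).trans hJ.2)
  by_contra hgp
  obtain ⟨b, hb⟩ := (Set.ne_univ_iff_exists_notMem _).1 hne
  obtain ⟨f₁, hf₁J, hf₁b⟩ := hJ.exists_functional_separating hb
  obtain ⟨f₂, hf₂g⟩ := exists_functional_apply_ne_zero hG hgp
  rcases h f₁ f₂ with ⟨α, hα⟩ | ⟨α, hα⟩
  · exact hf₂g (by rw [hα, hf₁J g hg, mul_zero])
  · have hα0 : α = 0 := (mul_eq_zero.1 ((hα g).symm.trans (hf₁J g hg))).resolve_right hf₂g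
    exact hf₁b (by rw [hα, hα0, zero_mul])

end PIdeal

theorem stmt10_general (p : ℕ) [Fact p.Prime] (G : Type*) [AddCommGroup G]
    (hG : ∀ x : G, p • x = 0 → x = 0) :
    (IsPSimple p G ∧ ∃ g : G, ¬∃ x : G, p • x = g) ↔
      ((∃ f : G →+ ℤ_[p], f ≠ 0) ∧
        ∀ f₁ f₂ : G →+ ℤ_[p],
          (∃ α : ℤ_[p], ∀ g : G, f₂ g = α * f₁ g) ∨
          (∃ α : ℤ_[p], ∀ g : G, f₁ g = α * f₂ g)) := by
  constructor
  · rintro ⟨hsimple, a, ha⟩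
    have haG : a ∉ GpSet p G := fun h ↦ ha (by simpa only [pDvd, pow_one] using h 1)
    obtain ⟨f, hfa⟩ := exists_functional_apply_ne_zero hG haG
    exact ⟨⟨f, fun hf ↦ hfa (DFunLike.congr_fun hf a)⟩,
      exists_eq_mul_or_exists_eq_mul (hsimple.eq_zero_of_apply_eq_zero haG)⟩
  · rintro ⟨⟨f, hf⟩, hprop⟩
    refine ⟨isPSimple_of_proportional hG hprop, ?_⟩
    by_contra! hdiv
    exact hf (AddMonoidHom.ext fun g ↦
      apply_eq_zero_of_mem_gpSet f (mem_gpSet_of_forall_exists_nsmul_eq hdiv g))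

theorem stmt10 (p : ℕ) [Fact p.Prime] (G : Type*) [AddCommGroup G]
    [NoZeroSMulDivisors ℤ G] :
    (IsPSimple p G ∧ ∃ g : G, ¬∃ x : G, p • x = g) ↔
      ((∃ f : G →+ ℤ_[p], f ≠ 0) ∧
        ∀ f₁ f₂ : G →+ ℤ_[p],
          (∃ α : ℤ_[p], ∀ g : G, f₂ g = α * f₁ g) ∨
          (∃ α : ℤ_[p], ∀ g : G, f₁ g = α * f₂ g)) := by
  refine stmt10_general p G fun x hx ↦ ?_
  exact (smul_eq_zero.1 ((natCast_zsmul x p).trans hx)).resolve_left (mod_cast NeZero.ne p)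
end

section
/- Let p be a prime, let G be a torsion-free abelian group, and let f be a p-adic functional on G. Then d_p^{*p}(f, 0) = sup({‖f(g)‖ / d_p(g, 0) : g ∈ G, d_p(g, 0) ≠ 0} ∪ {0}), where d_p^{*p} denotes the p-adic metric on Hom(G, ℤ_p). Equivalently, for every k ∈ ℕ: there exists a group homomorphism f' : G → ℤ_p with f = p^k • f' if and only if for every g ∈ G and every j ∈ ℕ such that g is divisible by p^j in G, one has ‖f(g)‖ ≤ p^{-(k+j)}. -/
/-!
In `ℤ_[p]` the bound `‖x‖ ≤ p ^ (-k)` means that `p ^ k` divides `x`. Multiplication by `p ^ k` is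
injective on `ℤ_[p]`, so a pointwise quotient of `f` by `p ^ k` is unique and therefore additive.
Hence the bounds with `j = 0` already give a quotient functional, and additivity of `f` recovers
the bounds for all `j`.
-/

theorem exists_addMonoidHom_eq_mul_iff_forall_dvd {G R : Type*} [AddZeroClass G]
    [NonUnitalSemiring R] {c : R} (hc : IsLeftRegular c) (f : G →+ R) :
    (∃ f' : G →+ R, ∀ g, f g = c * f' g) ↔ ∀ g, c ∣ f g := by
  refine ⟨fun ⟨f', hf'⟩ g => ⟨f' g, hf' g⟩, fun hdvd => ?_⟩
  choose q hq using hdvd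
  have q_zero : q 0 = 0 := hc <| by
    simp only [← hq, map_zero, mul_zero]
  have q_add (a b : G) : q (a + b) = q a + q b := hc <| by
    simp only [mul_add, ← hq, map_add]
  exact ⟨⟨⟨q, q_zero⟩, q_add⟩, hq⟩

theorem pow_add_dvd_map_pow_nsmul {G R : Type*} [AddMonoid G] [Semiring R] (f : G →+ R)
    {n k : ℕ} {x : G} (h : (n : R) ^ k ∣ f x) (j : ℕ) :
    (n : R) ^ (k + j) ∣ f (n ^ j • x) := by
  rw [map_nsmul, nsmul_eq_mul, Nat.cast_pow, add_comm, pow_add]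
  exact mul_dvd_mul_left _ h

theorem padicInt_norm_le_zpow_neg_iff_pow_dvd {p : ℕ} [Fact p.Prime] (x : ℤ_[p]) (n : ℕ) :
    ‖x‖ ≤ (p : ℝ) ^ (-(n : ℤ)) ↔ (p : ℤ_[p]) ^ n ∣ x := by
  rw [PadicInt.norm_le_pow_iff_mem_span_pow, Ideal.mem_span_singleton]

theorem forall_pow_dvd_iff_forall_norm_le {p : ℕ} [Fact p.Prime] {G : Type*} [AddMonoid G]
    (f : G →+ ℤ_[p]) (k : ℕ) :
    (∀ g, (p : ℤ_[p]) ^ k ∣ f g) ↔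
      ∀ (g : G) (j : ℕ), (∃ x : G, p ^ j • x = g) →
        ‖f g‖ ≤ (p : ℝ) ^ (-((k : ℤ) + (j : ℤ))) := by
  simp only [← Nat.cast_add, padicInt_norm_le_zpow_neg_iff_pow_dvd]
  constructor
  · rintro hdvd _ j ⟨x, rfl⟩
    exact pow_add_dvd_map_pow_nsmul f (hdvd x) j
  · intro hdvd g
    exact hdvd g 0 ⟨g, by rw [pow_zero, one_nsmul]⟩

theorem stmt11_general {p : ℕ} [Fact p.Prime] {G : Type*} [AddMonoid G] (f : G →+ ℤ_[p])
    (k : ℕ) :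
    (∃ f' : G →+ ℤ_[p], ∀ g : G, f g = (p : ℤ_[p]) ^ k * f' g) ↔
      ∀ (g : G) (j : ℕ), (∃ x : G, p ^ j • x = g) →
        ‖f g‖ ≤ (p : ℝ) ^ (-((k : ℤ) + (j : ℤ))) := by
  have pow_regular : IsLeftRegular ((p : ℤ_[p]) ^ k) :=
    (IsRegular.of_ne_zero PadicInt.prime_p.ne_zero).left.pow k
  rw [exists_addMonoidHom_eq_mul_iff_forall_dvd pow_regular, forall_pow_dvd_iff_forall_norm_le]

/-- In `Hom(G, ℤ_p)`, the distance of `f` to `0` in the `p`-adic metric is at most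
`p^{-k}` (i.e. `f` is divisible by `p^k` in `Hom(G, ℤ_p)`) if and only if
`‖f g‖ ≤ p^{-(k+j)}` whenever `g` is divisible by `p^j` in `G`; this expresses
that `d_p^{*p}(f, 0) = sup {‖f(g)‖ / d_p(g,0)}`. -/
theorem stmt11 (p : ℕ) [Fact p.Prime] (G : Type*) [AddCommGroup G]
    [NoZeroSMulDivisors ℤ G] (f : G →+ ℤ_[p]) :
    ∀ k : ℕ,
      (∃ f' : G →+ ℤ_[p], ∀ g : G, f g = (p : ℤ_[p]) ^ k * f' g) ↔
      (∀ (g : G) (j : ℕ), pDvd p j g → ‖f g‖ ≤ (p : ℝ) ^ (-((k : ℤ) + (j : ℤ)))) :=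
  stmt11_general f
end

section
/- Let p be a prime, let G be a torsion-free abelian group, let F be a nonempty subset of Hom(G, ℤ_p), and let f ∈ Hom(G, ℤ_p). Then the following are equivalent: (1) there exists g ∈ G such that ‖f(g)‖ > ‖f'(g)‖ for all f' ∈ F; (2) f does not lie in the closure, with respect to the relative topology on Hom(G, ℤ_p), of the ℤ_p-span of F. -/
/-!
If `‖f' g‖ < ‖f g‖` on `F`, the ultrametric inequality extends this to the span, and balls of
`ℤ_[p]` are closed, so it would survive passage to the closure. Conversely, if `f` is not in the
closure of the span `E`, then for some finite `I ⊆ G` and some `k` the restriction of `f` to `I` is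
not in the submodule `{h|_I : h ∈ E} + p ^ k • ℤ_[p] ^ I`. Smith normal form of this submodule
yields a linear form on `ℤ_[p] ^ I` separating the two modulo `p ^ k`. Its coefficients only matter
modulo `p ^ k`, so they can be taken to be natural numbers `cᵢ`, and on restrictions the form is
then evaluation at `g = ∑ i ∈ I, cᵢ • i`.
-/

open Filter Topology

theorem exists_smithNormalForm_f_eq_and_a_dvd {R M ι : Type*} [CommRing R] [AddCommGroup M]
    [Module R M] {n : ℕ} {r : R} (hr : r ≠ 0) {N : Submodule R M} (hN : ∀ x, r • x ∈ N)
    (snf : Module.Basis.SmithNormalForm N ι n) (i : ι) : ∃ j, snf.f j = i ∧ snf.a j ∣ r := by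
  have repr_smul : snf.bM.repr (r • snf.bM i) i = r := by simp
  obtain ⟨j, rfl⟩ : i ∈ Set.range snf.f := by
    by_contra hi
    exact hr (repr_smul ▸ snf.repr_eq_zero_of_notMem_range ⟨_, hN (snf.bM i)⟩ hi)
  refine ⟨j, rfl, snf.bN.repr ⟨_, hN (snf.bM (snf.f j))⟩ j, ?_⟩
  exact repr_smul.symm.trans
    (congrFun (snf.repr_comp_embedding_eq_smul ⟨_, hN (snf.bM (snf.f j))⟩) j)

theorem exists_dual_forall_mem_dvd_and_not_dvd {R M : Type*} [CommRing R] [IsDomain R]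
    [IsPrincipalIdealRing R] [AddCommGroup M] [Module R M] [Module.Free R M] [Module.Finite R M]
    {r : R} (hr : r ≠ 0) {N : Submodule R M} (hN : ∀ x, r • x ∈ N) {v : M} (hv : v ∉ N) :
    ∃ φ : Module.Dual R M, (∀ w ∈ N, r ∣ φ w) ∧ ¬ r ∣ φ v := by
  obtain ⟨n, snf⟩ := N.smithNormalForm (Module.Free.chooseBasis R M)
  obtain ⟨j, hj⟩ : ∃ j, ¬ snf.a j ∣ snf.bM.repr v (snf.f j) := by
    by_contra! hdvd
    refine hv ?_
    rw [← snf.bM.sum_repr v]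
    refine N.sum_mem fun i _ => ?_
    obtain ⟨j, rfl, -⟩ := exists_smithNormalForm_f_eq_and_a_dvd hr hN snf i
    obtain ⟨c, hc⟩ := hdvd j
    rw [hc, mul_comm, mul_smul, ← snf.snf]
    exact N.smul_mem c (snf.bN j).2
  obtain ⟨e, he⟩ : snf.a j ∣ r := by
    obtain ⟨j', hj', hdvd⟩ := exists_smithNormalForm_f_eq_and_a_dvd hr hN snf (snf.f j)
    exact snf.f.injective hj' ▸ hdvd
  have e_ne_zero : e ≠ 0 := right_ne_zero_of_mul (he ▸ hr)
  have smul_coord_apply (w : M) :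
      (e • snf.bM.coord (snf.f j)) w = e * snf.bM.repr w (snf.f j) := rfl
  refine ⟨e • snf.bM.coord (snf.f j), fun w hw => ?_, fun hdvd => hj ?_⟩
  · have repr_w : snf.bM.repr w (snf.f j) = snf.a j * snf.bN.repr ⟨w, hw⟩ j :=
      congrFun (snf.repr_comp_embedding_eq_smul ⟨w, hw⟩) j
    rw [smul_coord_apply, repr_w, he, mul_comm (snf.a j) e]
    exact mul_dvd_mul_left e (dvd_mul_right _ _)
  · rw [smul_coord_apply, he, mul_comm (snf.a j) e] at hdvd
    exact (mul_dvd_mul_iff_left e_ne_zero).1 hdvd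

/-- Evaluation at `g` as an `R`-linear map on the module of additive maps `G →+ B`, so that pairing
with `g` and restriction to a subset of `G` can be treated by linear algebra. -/
def evalLinearMap (R : Type*) {G B : Type*} [Semiring R] [AddMonoid G] [AddCommMonoid B]
    [Module R B] (g : G) : (G →+ B) →ₗ[R] B where
  toFun h := h g
  map_add' _ _ := rfl
  map_smul' _ _ := rfl

theorem notMem_closure_of_forall_norm_lt {X A : Type*} [TopologicalSpace X]
    [SeminormedAddGroup A] [IsUltrametricDist A] {φ : X → A} (hφ : Continuous φ) {S : Set X} {x : X}
    (hS : ∀ y ∈ S, ‖φ y‖ < ‖φ x‖) : x ∉ closure S := by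
  have hclosed : IsClosed (φ ⁻¹' Metric.ball 0 ‖φ x‖) :=
    (IsUltrametricDist.isClosed_ball 0 ‖φ x‖).preimage hφ
  have hSball : S ⊆ φ ⁻¹' Metric.ball 0 ‖φ x‖ := fun y hy => mem_ball_zero_iff.2 (hS y hy)
  exact fun hx => lt_irrefl ‖φ x‖ (mem_ball_zero_iff.1 (closure_minimal hSball hclosed hx))

section Padic

variable {p : ℕ} [Fact p.Prime]

theorem norm_apply_lt_of_mem_span {M : Type*} [AddCommMonoid M] [Module ℤ_[p] M]
    (φ : M →ₗ[ℤ_[p]] ℤ_[p]) {S : Set M} {r : ℝ} (hr : 0 < r) (hS : ∀ x ∈ S, ‖φ x‖ < r)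
    {x : M} (hx : x ∈ Submodule.span ℤ_[p] S) : ‖φ x‖ < r := by
  induction hx using Submodule.span_induction with
  | mem x hx => exact hS x hx
  | zero => simpa using hr
  | add x y _ _ hx hy =>
    rw [map_add]
    exact (PadicInt.nonarchimedean _ _).trans_lt (max_lt hx hy)
  | smul a x _ hx =>
    rw [map_smul, smul_eq_mul, norm_mul]
    exact (mul_le_of_le_one_left (norm_nonneg _) a.norm_le_one).trans_lt hx

theorem prime_pow_dvd_iff_norm_le (k : ℕ) (x : ℤ_[p]) :
    (p : ℤ_[p]) ^ k ∣ x ↔ ‖x‖ ≤ (p : ℝ)⁻¹ ^ k := by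
  rw [← Ideal.mem_span_singleton, ← PadicInt.norm_le_pow_iff_mem_span_pow, zpow_neg, inv_pow,
    zpow_natCast]

theorem hasBasis_nhds_prime_pow_dvd_sub (x : ℤ_[p]) :
    (𝓝 x).HasBasis (fun _ : ℕ => True) fun k => {y | (p : ℤ_[p]) ^ k ∣ y - x} := by
  have hp : 1 < (p : ℝ) := mod_cast (Fact.out : p.Prime).one_lt
  refine (Metric.nhds_basis_closedBall_pow (inv_pos.2 (zero_lt_one.trans hp))
    (inv_lt_one_of_one_lt₀ hp)).congr (fun _ => Iff.rfl) fun k _ => ?_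
  ext y
  rw [Metric.mem_closedBall, dist_eq_norm]
  exact (prime_pow_dvd_iff_norm_le k (y - x)).symm

theorem mem_closure_iff_forall_finset_prime_pow_dvd_sub {ι : Type*} {S : Set (ι → ℤ_[p])}
    {f : ι → ℤ_[p]} :
    f ∈ closure S ↔ ∀ (I : Finset ι) (k : ℕ), ∃ φ ∈ S, ∀ i ∈ I, (p : ℤ_[p]) ^ k ∣ φ i - f i := by
  have hbasis := hasBasis_pi_same_index (fun i => hasBasis_nhds_prime_pow_dvd_sub (f i))
    fun I k hI _ => by
      obtain ⟨K, hK⟩ := (hI.image k).bddAbove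
      exact ⟨K, trivial, fun i hi y hy =>
        (pow_dvd_pow _ (hK (Set.mem_image_of_mem k hi))).trans hy⟩
  rw [← nhds_pi] at hbasis
  rw [mem_closure_iff_nhds_basis hbasis]
  refine ⟨fun h I k => h (I, k) ⟨I.finite_toSet, trivial⟩, fun h ⟨I, k⟩ hI => ?_⟩
  simpa using h hI.1.toFinset k

theorem exists_forall_prime_pow_dvd_dual_comp_sub_apply {ι G : Type*} [Finite ι] [AddCommMonoid G]
    (x : ι → G) (k : ℕ) (φ : Module.Dual ℤ_[p] (ι → ℤ_[p])) :
    ∃ g : G, ∀ h : G →+ ℤ_[p], (p : ℤ_[p]) ^ k ∣ φ (h ∘ x) - h g := by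
  classical
  have := Fintype.ofFinite ι
  let c (i : ι) : ℤ_[p] := φ fun j => if i = j then 1 else 0
  refine ⟨∑ i, (c i).appr k • x i, fun h => ?_⟩
  have hsum : φ (h ∘ x) - h (∑ i, (c i).appr k • x i)
      = ∑ i, h (x i) * (c i - (c i).appr k) := by
    rw [LinearMap.pi_apply_eq_sum_univ, map_sum, ← Finset.sum_sub_distrib]
    refine Finset.sum_congr rfl fun i _ => ?_
    rw [map_nsmul, nsmul_eq_mul]
    change h (x i) * c i - (c i).appr k * h (x i) = _
    ring
  rw [hsum]
  exact Finset.dvd_sum fun i _ =>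
    (Ideal.mem_span_singleton.1 (PadicInt.appr_spec k (c i))).mul_left _

variable {G : Type*} [AddCommMonoid G] {f : G →+ ℤ_[p]}

theorem exists_forall_mem_prime_pow_dvd_and_not_dvd {E : Submodule ℤ_[p] (G →+ ℤ_[p])}
    (I : Finset G) (k : ℕ) (hE : ∀ h ∈ E, ∃ i ∈ I, ¬ (p : ℤ_[p]) ^ k ∣ h i - f i) :
    ∃ g : G, (∀ h ∈ E, (p : ℤ_[p]) ^ k ∣ h g) ∧ ¬ (p : ℤ_[p]) ^ k ∣ f g := by
  let restrict : (G →+ ℤ_[p]) →ₗ[ℤ_[p]] (I → ℤ_[p]) :=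
    LinearMap.pi fun i => evalLinearMap ℤ_[p] (i : G)
  let N := E.map restrict ⊔ LinearMap.range ((p : ℤ_[p]) ^ k • LinearMap.id)
  have restrict_f_notMem : restrict f ∉ N := by
    intro hmem
    obtain ⟨_, ⟨h, hh, rfl⟩, _, ⟨w, rfl⟩, hsum⟩ := Submodule.mem_sup.1 hmem
    obtain ⟨i, hi, hndvd⟩ := hE h hh
    have hfi : h i + (p : ℤ_[p]) ^ k * w ⟨i, hi⟩ = f i := congrFun hsum ⟨i, hi⟩
    exact hndvd ⟨-w ⟨i, hi⟩, by rw [← hfi]; ring⟩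
  have pow_smul_mem (w : I → ℤ_[p]) : (p : ℤ_[p]) ^ k • w ∈ N :=
    Submodule.mem_sup_right ⟨w, rfl⟩
  obtain ⟨φ, hφN, hφf⟩ := exists_dual_forall_mem_dvd_and_not_dvd
    (pow_ne_zero k PadicInt.prime_p.ne_zero) pow_smul_mem restrict_f_notMem
  obtain ⟨g, hg⟩ := exists_forall_prime_pow_dvd_dual_comp_sub_apply ((↑) : I → G) k φ
  refine ⟨g, fun h hh => ?_, fun hdvd => hφf ?_⟩
  · exact (dvd_iff_dvd_of_dvd_sub (hg h)).1
      (hφN _ (Submodule.mem_sup_left (Submodule.mem_map_of_mem hh)))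
  · exact (dvd_iff_dvd_of_dvd_sub (hg f)).2 hdvd

theorem exists_forall_mem_norm_apply_lt_of_notMem_closure {E : Submodule ℤ_[p] (G →+ ℤ_[p])}
    (hf : (⇑f : G → ℤ_[p]) ∉ closure {φ | ∃ h ∈ E, ⇑h = φ}) :
    ∃ g : G, ∀ h ∈ E, ‖h g‖ < ‖f g‖ := by
  rw [mem_closure_iff_forall_finset_prime_pow_dvd_sub] at hf
  push Not at hf
  obtain ⟨I, k, hIk⟩ := hf
  obtain ⟨g, hgE, hgf⟩ :=
    exists_forall_mem_prime_pow_dvd_and_not_dvd I k fun h hh => hIk h ⟨h, hh, rfl⟩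
  rw [prime_pow_dvd_iff_norm_le, not_le] at hgf
  exact ⟨g, fun h hh => ((prime_pow_dvd_iff_norm_le k (h g)).1 (hgE h hh)).trans_lt hgf⟩

theorem stmt13_general {F : Set (G →+ ℤ_[p])} (hF : F.Nonempty) :
    (∃ g : G, ∀ f' ∈ F, ‖f' g‖ < ‖f g‖) ↔
      (⇑f : G → ℤ_[p]) ∉
        closure {φ : G → ℤ_[p] | ∃ f' ∈ Submodule.span ℤ_[p] F, ⇑f' = φ} := by
  constructor
  · rintro ⟨g, hg⟩
    obtain ⟨f₀, hf₀⟩ := hF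
    have norm_pos : 0 < ‖f g‖ := (norm_nonneg _).trans_lt (hg f₀ hf₀)
    refine notMem_closure_of_forall_norm_lt (continuous_apply g) ?_
    rintro _ ⟨h, hh, rfl⟩
    exact norm_apply_lt_of_mem_span (evalLinearMap ℤ_[p] g) norm_pos hg hh
  · intro hf
    obtain ⟨g, hg⟩ := exists_forall_mem_norm_apply_lt_of_notMem_closure hf
    exact ⟨g, fun f' hf' => hg f' (Submodule.subset_span hf')⟩

end Padic

theorem stmt13 (p : ℕ) [Fact p.Prime] (G : Type*) [AddCommGroup G]
    [NoZeroSMulDivisors ℤ G] (F : Set (G →+ ℤ_[p])) (hF : F.Nonempty)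
    (f : G →+ ℤ_[p]) :
    (∃ g : G, ∀ f' ∈ F, ‖f' g‖ < ‖f g‖) ↔
      (⇑f : G → ℤ_[p]) ∉
        closure {φ : G → ℤ_[p] | ∃ f' ∈ Submodule.span ℤ_[p] F, ⇑f' = φ} :=
  stmt13_general hF
end

section
/- Let p be a prime, let G be a torsion-free abelian group, and let H be a subgroup of G of index p^k for some k ∈ ℕ. Then there exists a unique continuous additive group homomorphism θ_H from the double dual Hom(Hom(G, ℤ_p), ℤ_p), equipped with the relative topology, to the quotient group G/H, equipped with the discrete topology, such that θ_H(ĝ) = g + H for every g ∈ G, where ĝ denotes the evaluation map f ↦ f(g). -/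
/-!
Reduction modulo `p ^ n` maps `Hom(G, ℤ_p)` onto `Hom(G, ℤ/p^n)`: on a finitely generated, hence
free, subgroup of `G` a character lifts to `ℤ_p`, and compactness of `ℤ_p` glues these lifts.
The kernel is `p ^ n • Hom(G, ℤ_p)`, so every `Φ` in the double dual induces a homomorphism
`Hom(G, ℤ/p^n) → ℤ/p^n`. Pulling back along `π : G → A`, with `A` finite and killed by `p ^ n`,
gives an element of the `ℤ/p^n`-double dual of `A`, which is `A` itself by finite duality. This is
the value of the extension of `π` at `Φ`; it depends only on the residues modulo `p ^ n` of finitely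
many `Φ f`, whence continuity. Applying the same construction to the homomorphism
`g ↦ (f g mod p ^ n)_{f ∈ I}`, for a finite set `I` of functionals, shows that evaluations are dense
in the double dual, whence uniqueness.
-/

section CompactLifting

variable {G K A : Type*} [AddCommGroup G] [IsAddTorsionFree G] [AddCommGroup K] [AddCommGroup A]

theorem exists_additiveOn_lift_of_fg {L : AddSubgroup G} (hL : L.FG) {π : K →+ A}
    (hπ : Function.Surjective π) (χ : G →+ A) :
    ∃ f : G → K, ∀ x ∈ L, ∀ y ∈ L, f (x + y) = f x + f y ∧ π (f x) = χ x := by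
  have : Module.Finite ℤ L :=
    Module.Finite.iff_addGroup_fg.2 ((AddGroup.fg_iff_addSubgroup_fg L).2 hL)
  obtain ⟨h, hh⟩ := Module.projective_lifting_property π.toIntLinearMap
    (χ.comp L.subtype).toIntLinearMap hπ
  have extend_coe (x : L) : Function.extend L.subtype h 0 x = h x :=
    L.subtype_injective.extend_apply h 0 x
  refine ⟨Function.extend L.subtype h 0, fun x hx y hy => ⟨?_, ?_⟩⟩
  · lift x to L using hx
    lift y to L using hy
    rw [← AddSubgroup.coe_add, extend_coe, extend_coe, extend_coe, map_add]
  · lift x to L using hx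
    rw [extend_coe]
    exact LinearMap.congr_fun hh x

theorem exists_comp_eq_of_compactSpace [TopologicalSpace K] [ContinuousAdd K] [CompactSpace K]
    [T2Space K] [TopologicalSpace A] [T1Space A] {π : K →+ A} (hπ : Continuous π)
    (hsurj : Function.Surjective π) (χ : G →+ A) :
    ∃ f : G →+ K, π.comp f = χ := by
  let t (z : G × G) : Set (G → K) := {f | f (z.1 + z.2) = f z.1 + f z.2 ∧ π (f z.1) = χ z.1}
  have isClosed_t (z : G × G) : IsClosed (t z) :=
    (isClosed_eq (by fun_prop) (by fun_prop)).inter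
      (isClosed_singleton.preimage (hπ.comp (continuous_apply z.1)))
  have finite_inter (s : Finset (G × G)) : (⋂ z ∈ s, t z).Nonempty := by
    let S : Set G := Prod.fst '' (s : Set (G × G)) ∪ Prod.snd '' (s : Set (G × G))
    have finite_S : S.Finite := (s.finite_toSet.image _).union (s.finite_toSet.image _)
    have fg : (AddSubgroup.closure S).FG := (AddSubgroup.fg_iff _).2 ⟨S, rfl, finite_S⟩
    obtain ⟨f, hf⟩ := exists_additiveOn_lift_of_fg fg hsurj χ
    exact ⟨f, Set.mem_iInter₂.2 fun z hz =>
      hf _ (AddSubgroup.subset_closure (.inl ⟨z, hz, rfl⟩))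
        _ (AddSubgroup.subset_closure (.inr ⟨z, hz, rfl⟩))⟩
  obtain ⟨f, hf⟩ := CompactSpace.iInter_nonempty isClosed_t finite_inter
  rw [Set.mem_iInter] at hf
  exact ⟨AddMonoidHom.mk' f fun x y => (hf (x, y)).1, AddMonoidHom.ext fun x => (hf (x, x)).2⟩

end CompactLifting

section FiniteDuality

theorem hasEnoughRootsOfUnity_multiplicative_zmod (N : ℕ) :
    HasEnoughRootsOfUnity (Multiplicative (ZMod N)) N where
  prim := ⟨.ofAdd 1, by
    simpa [orderOf_ofAdd_eq_addOrderOf, ZMod.addOrderOf_one] using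
      IsPrimitiveRoot.orderOf (Multiplicative.ofAdd (1 : ZMod N))⟩
  cyc := by
    have : IsCyclic (Multiplicative (ZMod N))ˣ :=
      isCyclic_of_surjective (toUnits (G := Multiplicative (ZMod N))) toUnits.surjective
    infer_instance

variable {N : ℕ} {A : Type*} [AddCommGroup A]

/-- `ZMod N`-valued characters of `A` as characters with values in the units of the multiplicative
monoid `Multiplicative (ZMod N)`, the form in which Mathlib states duality of finite abelian
groups. -/
def zmodCharEquiv : (A →+ ZMod N) ≃ (Multiplicative A →* (Multiplicative (ZMod N))ˣ) :=
  AddMonoidHom.toMultiplicative.trans toUnits.monoidHomCongrRightEquiv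

variable [NeZero N]

theorem hasEnoughRootsOfUnity_exponent (hA : ∀ a : A, N • a = 0) :
    HasEnoughRootsOfUnity (Multiplicative (ZMod N)) (Monoid.exponent (Multiplicative A)) :=
  have := hasEnoughRootsOfUnity_multiplicative_zmod N
  .of_dvd _ (Monoid.exponent_dvd_of_forall_pow_eq_one fun a => hA a.toAdd)

variable [Finite A] (hA : ∀ a : A, N • a = 0)
include hA

theorem card_addMonoidHom_zmod : Nat.card (A →+ ZMod N) = Nat.card A := by
  have := hasEnoughRootsOfUnity_exponent hA
  rw [Nat.card_congr zmodCharEquiv, CommGroup.card_monoidHom_of_hasEnoughRootsOfUnity,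
    Nat.card_congr Multiplicative.toAdd]

theorem eval_zmod_injective :
    Function.Injective (AddMonoidHom.eval : A →+ (A →+ ZMod N) →+ ZMod N) := by
  have := hasEnoughRootsOfUnity_exponent hA
  rw [injective_iff_map_eq_zero]
  intro a ha
  by_contra hne
  obtain ⟨φ, hφ⟩ := CommGroup.exists_apply_ne_one_of_hasEnoughRootsOfUnity (Multiplicative A)
    (Multiplicative (ZMod N)) (a := .ofAdd a) hne
  exact hφ (Units.ext (DFunLike.congr_fun ha (zmodCharEquiv.symm φ)))

theorem eval_zmod_bijective :
    Function.Bijective (AddMonoidHom.eval : A →+ (A →+ ZMod N) →+ ZMod N) := by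
  have : Finite (A →+ ZMod N) := DFunLike.finite _
  have : Finite ((A →+ ZMod N) →+ ZMod N) := DFunLike.finite _
  have card_bidual : Nat.card ((A →+ ZMod N) →+ ZMod N) = Nat.card (A →+ ZMod N) :=
    card_addMonoidHom_zmod fun χ => AddMonoidHom.ext fun a => by simp
  rw [Nat.bijective_iff_injective_and_card, card_bidual, card_addMonoidHom_zmod hA]
  exact ⟨eval_zmod_injective hA, rfl⟩

end FiniteDuality

section PadicInt

variable {p : ℕ} [Fact p.Prime]

theorem padicInt_dist_le_iff_toZModPow_eq {n : ℕ} {x y : ℤ_[p]} :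
    dist x y ≤ (p : ℝ) ^ (-n : ℤ) ↔ PadicInt.toZModPow n x = PadicInt.toZModPow n y := by
  rw [dist_eq_norm, PadicInt.norm_le_pow_iff_mem_span_pow, ← PadicInt.ker_toZModPow,
    RingHom.mem_ker, map_sub, sub_eq_zero]

theorem continuous_toZModPow (n : ℕ) : Continuous (PadicInt.toZModPow (p := p) n) := by
  rw [← IsLocallyConstant.iff_continuous, IsLocallyConstant.iff_eventually_eq]
  intro x
  have radius_pos : (0 : ℝ) < (p : ℝ) ^ (-n : ℤ) :=
    zpow_pos (by exact_mod_cast (Fact.out : p.Prime).pos) _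
  filter_upwards [Metric.closedBall_mem_nhds x radius_pos] with y hy
  exact padicInt_dist_le_iff_toZModPow_eq.1 hy

open Filter Topology in
theorem eventually_toZModPow_fiber_subset {x : ℤ_[p]} {u : Set ℤ_[p]} (hu : u ∈ 𝓝 x) :
    ∀ᶠ n in atTop, ∀ y, PadicInt.toZModPow n y = PadicInt.toZModPow n x → y ∈ u := by
  obtain ⟨ε, hε, ball_subset⟩ := Metric.mem_nhds_iff.1 hu
  have one_lt : (1 : ℝ) < p := by exact_mod_cast (Fact.out : p.Prime).one_lt
  have radius_tendsto : Tendsto (fun n : ℕ => (p : ℝ) ^ (-n : ℤ)) atTop (𝓝 0) := by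
    simpa using! tendsto_inv_atTop_zero.comp (tendsto_pow_atTop_atTop_of_one_lt one_lt)
  filter_upwards [radius_tendsto.eventually_lt_const hε] with n hn y hy
  exact ball_subset ((padicInt_dist_le_iff_toZModPow_eq.2 hy).trans_lt hn)

theorem exists_eq_nsmul_of_toZModPow_eq_zero {G : Type*} [AddCommGroup G] {n : ℕ} {f : G →+ ℤ_[p]}
    (hf : ∀ g, PadicInt.toZModPow n (f g) = 0) : ∃ f' : G →+ ℤ_[p], f = p ^ n • f' := by
  have p_pow_ne_zero : (p : ℤ_[p]) ^ n ≠ 0 :=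
    pow_ne_zero _ (by exact_mod_cast (Fact.out : p.Prime).ne_zero)
  have dvd (g : G) : (p : ℤ_[p]) ^ n ∣ f g := by
    rw [← Ideal.mem_span_singleton, ← PadicInt.ker_toZModPow, RingHom.mem_ker, hf]
  choose c hc using dvd
  refine ⟨AddMonoidHom.mk' c fun x y => mul_left_cancel₀ p_pow_ne_zero ?_, ?_⟩
  · rw [mul_add, ← hc, ← hc, ← hc, map_add]
  · ext g
    simp [hc g]

end PadicInt

section Bidual

variable {p : ℕ} [Fact p.Prime] {G : Type*} [AddCommGroup G]

/-- Reduction modulo `p ^ n` of `p`-adic functionals. -/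
noncomputable def padicReduction (n : ℕ) : (G →+ ℤ_[p]) →+ (G →+ ZMod (p ^ n)) :=
  AddMonoidHom.compHom (PadicInt.toZModPow n).toAddMonoidHom

@[simp]
theorem padicReduction_apply (n : ℕ) (f : G →+ ℤ_[p]) (g : G) :
    padicReduction n f g = PadicInt.toZModPow n (f g) :=
  rfl

theorem ker_padicReduction_le (n : ℕ) (Φ : (G →+ ℤ_[p]) →+ ℤ_[p]) :
    (padicReduction n).ker ≤ (padicReduction n Φ).ker := by
  intro f hf
  obtain ⟨f', rfl⟩ := exists_eq_nsmul_of_toZModPow_eq_zero (DFunLike.congr_fun hf)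
  rw [AddMonoidHom.mem_ker, map_nsmul, nsmul_eq_mul, ZMod.natCast_self, zero_mul]

variable [IsAddTorsionFree G]

theorem padicReduction_surjective (n : ℕ) :
    Function.Surjective (padicReduction n : (G →+ ℤ_[p]) →+ _) :=
  exists_comp_eq_of_compactSpace (π := (PadicInt.toZModPow n).toAddMonoidHom)
    (continuous_toZModPow n) (ZMod.ringHom_surjective (PadicInt.toZModPow n))

/-- Reduction modulo `p ^ n` of the double dual: `Φ` is sent to the homomorphism it induces on
`ZMod (p ^ n)`-valued characters. -/
noncomputable def bidualReduction (n : ℕ) :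
    ((G →+ ℤ_[p]) →+ ℤ_[p]) →+ (G →+ ZMod (p ^ n)) →+ ZMod (p ^ n) :=
  AddMonoidHom.mk'
    (fun Φ => (padicReduction n).liftOfSurjective (padicReduction_surjective n)
      ⟨padicReduction n Φ, ker_padicReduction_le n Φ⟩)
    fun Φ Ψ => AddMonoidHom.ext fun χ => by
      obtain ⟨f, rfl⟩ := padicReduction_surjective n χ
      simp

@[simp]
theorem bidualReduction_apply_padicReduction (n : ℕ) (Φ : (G →+ ℤ_[p]) →+ ℤ_[p])
    (f : G →+ ℤ_[p]) : bidualReduction n Φ (padicReduction n f) = PadicInt.toZModPow n (Φ f) :=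
  AddMonoidHom.liftOfRightInverse_comp_apply ..

theorem bidualReduction_eval (n : ℕ) (g : G) (χ : G →+ ZMod (p ^ n)) :
    bidualReduction n (AddMonoidHom.eval g) χ = χ g := by
  obtain ⟨f, rfl⟩ := padicReduction_surjective n χ
  simp

section Extension

variable {A : Type*} [AddCommGroup A] [Finite A] {n : ℕ} (hA : ∀ a : A, p ^ n • a = 0)
  (π : G →+ A)

/-- The extension of a homomorphism `π : G →+ A` to the double dual of `G`, for a finite group `A`
killed by `p ^ n`: the reduced double dual of `π`, with `A` identified with its
`ZMod (p ^ n)`-valued double dual. -/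
noncomputable def bidualExtension : ((G →+ ℤ_[p]) →+ ℤ_[p]) →+ A :=
  (AddEquiv.ofBijective _ (eval_zmod_bijective hA)).symm.toAddMonoidHom.comp
    ((AddMonoidHom.compHom' (AddMonoidHom.compHom' π)).comp (bidualReduction n))

theorem apply_bidualExtension (Φ : (G →+ ℤ_[p]) →+ ℤ_[p]) (χ : A →+ ZMod (p ^ n)) :
    χ (bidualExtension hA π Φ) = bidualReduction n Φ (χ.comp π) :=
  DFunLike.congr_fun ((AddEquiv.ofBijective _ (eval_zmod_bijective hA)).apply_symm_apply _) χ

theorem bidualExtension_eval (g : G) : bidualExtension hA π (AddMonoidHom.eval g) = π g :=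
  eval_zmod_injective hA <| AddMonoidHom.ext fun χ => by
    simp [apply_bidualExtension, bidualReduction_eval]

end Extension

theorem exists_forall_toZModPow_apply_eq (Φ : (G →+ ℤ_[p]) →+ ℤ_[p]) (I : Finset (G →+ ℤ_[p]))
    (n : ℕ) : ∃ g : G, ∀ f ∈ I, PadicInt.toZModPow n (f g) = PadicInt.toZModPow n (Φ f) := by
  let F : G →+ (I → ZMod (p ^ n)) := AddMonoidHom.pi fun f => padicReduction n f.1
  have nsmul_range (a : F.range) : p ^ n • a = 0 := Subtype.ext (funext fun f => by simp)
  obtain ⟨g, hg⟩ := F.rangeRestrict_surjective (bidualExtension nsmul_range F.rangeRestrict Φ)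
  refine ⟨g, fun f hf => ?_⟩
  let χ : F.range →+ ZMod (p ^ n) := (Pi.evalAddMonoidHom _ ⟨f, hf⟩).comp F.range.subtype
  calc PadicInt.toZModPow n (f g)
    _ = χ (F.rangeRestrict g) := rfl
    _ = bidualReduction n Φ (χ.comp F.rangeRestrict) := by rw [hg, apply_bidualExtension]
    _ = bidualReduction n Φ (padicReduction n f) := rfl
    _ = PadicInt.toZModPow n (Φ f) := bidualReduction_apply_padicReduction n Φ f

end Bidual

section Topology

/-- The topology of pointwise convergence on additive homomorphisms. -/
abbrev pointwiseTopology (M N : Type*) [AddZeroClass M] [AddZeroClass N] [TopologicalSpace N] :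
    TopologicalSpace (M →+ N) :=
  .induced (fun φ => (φ : M → N)) inferInstance

attribute [local instance] pointwiseTopology

variable {p : ℕ} [Fact p.Prime] {G : Type*} [AddCommGroup G] [IsAddTorsionFree G]

theorem continuous_bidualReduction_apply {n : ℕ} (χ : G →+ ZMod (p ^ n)) :
    Continuous fun Φ : (G →+ ℤ_[p]) →+ ℤ_[p] => bidualReduction n Φ χ := by
  obtain ⟨f, rfl⟩ := padicReduction_surjective n χ
  simp only [bidualReduction_apply_padicReduction]
  exact (continuous_toZModPow n).comp ((continuous_apply f).comp continuous_induced_dom)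

theorem denseRange_eval : DenseRange (AddMonoidHom.eval : G →+ (G →+ ℤ_[p]) →+ ℤ_[p]) := by
  intro Φ
  rw [mem_closure_iff]
  rintro _ ⟨V, hV, rfl⟩ hΦ
  obtain ⟨I, u, hu, pi_subset⟩ := isOpen_pi_iff.1 hV _ hΦ
  have eventually_mem : ∀ᶠ n in Filter.atTop, ∀ f ∈ I, ∀ y,
      PadicInt.toZModPow n y = PadicInt.toZModPow n (Φ f) → y ∈ u f :=
    (Filter.eventually_all_finset I).2 fun f hf =>
      eventually_toZModPow_fiber_subset ((hu f hf).1.mem_nhds (hu f hf).2)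
  obtain ⟨n, hn⟩ := eventually_mem.exists
  obtain ⟨g, hg⟩ := exists_forall_toZModPow_apply_eq Φ I n
  exact ⟨_, pi_subset fun f hf => hn f hf _ (hg f hf), g, rfl⟩

variable {A : Type*} [AddCommGroup A] [Finite A] [TopologicalSpace A] [DiscreteTopology A]

theorem continuous_bidualExtension {n : ℕ} (hA : ∀ a : A, p ^ n • a = 0) (π : G →+ A) :
    Continuous (bidualExtension hA π) := by
  have : Finite (A →+ ZMod (p ^ n)) := DFunLike.finite _
  have characters_continuous :
      Continuous fun Φ (χ : A →+ ZMod (p ^ n)) => χ (bidualExtension hA π Φ) :=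
    continuous_pi fun χ => by
      simpa only [apply_bidualExtension] using continuous_bidualReduction_apply (χ.comp π)
  have characters_injective : Function.Injective fun (a : A) (χ : A →+ ZMod (p ^ n)) => χ a :=
    DFunLike.coe_injective.comp (eval_zmod_injective hA)
  rw [← IsLocallyConstant.iff_continuous] at characters_continuous ⊢
  exact characters_continuous.desc _ _ characters_injective

theorem stmt16_general {k : ℕ} (hA : ∀ a : A, p ^ k • a = 0) (π : G →+ A) :
    ∃! θ : ((G →+ ℤ_[p]) →+ ℤ_[p]) →+ A,
      Continuous θ ∧ ∀ g : G, θ (AddMonoidHom.eval g) = π g := by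
  refine ⟨bidualExtension hA π,
    ⟨continuous_bidualExtension hA π, bidualExtension_eval hA π⟩, fun θ ⟨hθ, hθπ⟩ => ?_⟩
  refine DFunLike.coe_injective (denseRange_eval.equalizer hθ (continuous_bidualExtension hA π) ?_)
  exact funext fun g => (hθπ g).trans (bidualExtension_eval hA π g).symm

end Topology

theorem stmt16 (p : ℕ) [Fact p.Prime] (G : Type*) [AddCommGroup G]
    [NoZeroSMulDivisors ℤ G] (H : AddSubgroup G) (k : ℕ)
    (hH : Nat.card (G ⧸ H) = p ^ k) :
    -- the relative topology on the double dual, inherited from `ℤ_p^{Hom(G, ℤ_p)}`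
    letI : TopologicalSpace ((G →+ ℤ_[p]) →+ ℤ_[p]) :=
      TopologicalSpace.induced (fun Φ => (⇑Φ : (G →+ ℤ_[p]) → ℤ_[p])) inferInstance
    -- the discrete topology on `G ⧸ H`
    letI : TopologicalSpace (G ⧸ H) := ⊥
    ∃! θ : ((G →+ ℤ_[p]) →+ ℤ_[p]) →+ G ⧸ H,
      Continuous θ ∧
      ∀ g : G,
        θ (AddMonoidHom.mk' (fun f : G →+ ℤ_[p] => f g) (fun _ _ => rfl)) =
          QuotientAddGroup.mk g := by
  have : IsAddTorsionFree G := Module.isTorsionFree_int_iff_isAddTorsionFree.1 inferInstance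
  have : Finite (G ⧸ H) :=
    Nat.finite_of_card_ne_zero (hH ▸ pow_ne_zero k (Fact.out : p.Prime).ne_zero)
  let : TopologicalSpace (G ⧸ H) := ⊥
  have : DiscreteTopology (G ⧸ H) := ⟨rfl⟩
  exact stmt16_general (fun a => hH ▸ card_nsmul_eq_zero') (QuotientAddGroup.mk' H)
end
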